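/- Let n ≥ 4 and let Γ be a finite index subgroup of Aut(F_n) that contains IA_n. Then both Γ and its commutator subgroup [Γ,Γ] have finite abelianizations. In particular, every group homomorphism Γ → (ℝ,+) is trivial and every group homomorphism [Γ,Γ] → (ℝ,+) is trivial. -/

import Mathlib

noncomputable section

/-- The free group of rank `n`. -/
abbrev FreeGrp (n : ℕ) : Type := FreeGroup (Fin n)

/-- The automorphism group `Aut(Fₙ)`. -/
abbrev AutF (n : ℕ) : Type := MulAut (FreeGrp n)

/-- The subgroup `IAₙ ≤ Aut(Fₙ)` of automorphisms acting trivially on the abelianization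
`Fₙ^{ab} ≅ ℤⁿ`, i.e. the kernel of the natural map `Aut(Fₙ) → Aut(ℤⁿ)`. -/
def IA (n : ℕ) : Subgroup (AutF n) where
  carrier := {e | ∀ x : FreeGrp n, Abelianization.of (e x) = Abelianization.of x}
  one_mem' := fun _ => rfl
  mul_mem' := by
    intro a b ha hb x
    have h : (a * b) x = a (b x) := rfl
    rw [h, ha (b x), hb x]
  inv_mem' := by
    intro a ha x
    have h := ha (a⁻¹ x)
    have h' : a (a⁻¹ x) = x := a.apply_symm_apply x
    rw [h'] at h
    exact h.symm

/-!
Write `K i j` for the partial conjugation `xᵢ ↦ xⱼ⁻¹ xᵢ xⱼ`. Modulo the normal closure of the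
`K i j` the transvections satisfy the Steinberg relations, and modulo `[S, S]`, for `S` normal of
finite index, powers of them commute, which together with these relations makes them torsion.
Bounded generation by root subgroups, Schur's theorem on central extensions and perfectness then
show that they generate a finite group. By Nielsen's theorem the transvections generate a subgroup
of finite index in `Aut(Fₙ)`, so `[S, S]` and the conjugates of the `K i j` generate a subgroup of
finite index. If `N` is normal of finite index and contains `IAₙ`, then some power of each `K i j`
lies in `[N, N]`, and so `[N, N]` itself has finite index.

If the abelianization of `[N, N]` is infinite, some complex character of `[N, N]` is nonzero at some
`u`. Averaging over the finite group `N / [N, N]` makes it equivariant, and it then gives an affine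
representation of `N` on the complex line which is nontrivial at `u`. Commuting is transitive among
nontrivial affine maps. If some conjugate of some `K i j` acts nontrivially, transitivity forces
`[N, N]` to act trivially; otherwise the first part, applied to `S = [N, N]`, does.
-/

namespace FreeAut

open FreeGroup (of)

section Generators

variable {ι : Type*}

theorem aut_ext {α β : MulAut (FreeGroup ι)} (h : ∀ j, α (of j) = β (of j)) : α = β :=
  MulEquiv.toMonoidHom_injective (FreeGroup.ext_hom _ _ h)

theorem inv_apply_eq_of_apply_eq {G : Type*} [Group G] {α : MulAut G} {x : G} (h : α x = x) :
    α⁻¹ x = x := by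
  conv_lhs => rw [← h]
  exact MulAut.inv_apply_self _ _ x

theorem conj_conj {G : Type*} [Group G] (s : MulAut G) (g : G) :
    s * MulAut.conj g * s⁻¹ = MulAut.conj (s g) := by
  rw [mul_inv_eq_iff_eq_mul]
  ext x
  simp

/-- The free group on the letters other than `i`. -/
abbrev CoFree (i : ι) : Type _ := FreeGroup {j : ι // i ≠ j}

/-- The inclusion of the free group on the letters other than `i`. -/
def incl (i : ι) : CoFree i →* FreeGroup ι := FreeGroup.map Subtype.val

@[simp] theorem incl_of (i : ι) (j : {j : ι // i ≠ j}) : incl i (of j) = of j.1 := by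
  simp [incl]

/-- A letter `j ≠ i`, as an element of the free group on the letters other than `i`. -/
def letter {i j : ι} (h : i ≠ j) : CoFree i := of ⟨j, h⟩

@[simp] theorem incl_letter {i j : ι} (h : i ≠ j) : incl i (letter h) = of j := incl_of i ⟨j, h⟩

theorem hom_ext_incl (i : ι) {H : Type*} [Group H] {f g : FreeGroup ι →* H}
    (h : f (of i) = g (of i)) (h' : ∀ w, f (incl i w) = g (incl i w)) : f = g := by
  refine FreeGroup.ext_hom _ _ fun j => ?_
  obtain rfl | hj := eq_or_ne i j
  · exact h
  · simpa using h' (letter hj)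

theorem autExt_incl (i : ι) {α β : MulAut (FreeGroup ι)} (h : α (of i) = β (of i))
    (h' : ∀ w, α (incl i w) = β (incl i w)) : α = β :=
  MulEquiv.toMonoidHom_injective (hom_ext_incl i h h')

variable [DecidableEq ι]

/-- The endomorphism underlying `bothMul`. -/
def bothMulHom (i : ι) (p : CoFree i × CoFree i) : FreeGroup ι →* FreeGroup ι :=
  FreeGroup.lift fun j => if i = j then (incl i p.1)⁻¹ * of i * incl i p.2 else of j

theorem bothMulHom_self (i : ι) (p : CoFree i × CoFree i) :
    bothMulHom i p (of i) = (incl i p.1)⁻¹ * of i * incl i p.2 := by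
  simp [bothMulHom]

theorem bothMulHom_incl (i : ι) (p : CoFree i × CoFree i) (w : CoFree i) :
    bothMulHom i p (incl i w) = incl i w := by
  have : (bothMulHom i p).comp (incl i) = incl i :=
    FreeGroup.ext_hom _ _ fun j => by simp [bothMulHom, j.2]
  exact DFunLike.congr_fun this w

theorem bothMulHom_comp (i : ι) (p q : CoFree i × CoFree i) :
    (bothMulHom i p).comp (bothMulHom i q) = bothMulHom i (p * q) :=
  hom_ext_incl i (by simp [bothMulHom_self, bothMulHom_incl, mul_assoc])
    fun w => by simp [bothMulHom_incl]

theorem bothMulHom_one (i : ι) : bothMulHom i 1 = MonoidHom.id _ :=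
  hom_ext_incl i (by simp [bothMulHom_self]) fun w => by simp [bothMulHom_incl]

/-- The automorphism `xᵢ ↦ u⁻¹ xᵢ v` fixing the other letters, for words `u, v` not involving
`xᵢ`, as a homomorphism in `(u, v)`. -/
def bothMul (i : ι) : CoFree i × CoFree i →* MulAut (FreeGroup ι) where
  toFun p := MonoidHom.toMulEquiv (bothMulHom i p) (bothMulHom i p⁻¹)
    (by rw [bothMulHom_comp, inv_mul_cancel, bothMulHom_one])
    (by rw [bothMulHom_comp, mul_inv_cancel, bothMulHom_one])
  map_one' := MulEquiv.toMonoidHom_injective (bothMulHom_one i)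
  map_mul' p q := MulEquiv.toMonoidHom_injective (bothMulHom_comp i p q).symm

@[simp] theorem bothMul_self (i : ι) (p : CoFree i × CoFree i) :
    bothMul i p (of i) = (incl i p.1)⁻¹ * of i * incl i p.2 := bothMulHom_self i p

@[simp] theorem bothMul_incl (i : ι) (p : CoFree i × CoFree i) (w : CoFree i) :
    bothMul i p (incl i w) = incl i w := bothMulHom_incl i p w

theorem bothMul_of_ne {i j : ι} (h : i ≠ j) (p : CoFree i × CoFree i) :
    bothMul i p (of j) = of j := by
  simpa using bothMul_incl i p (letter h)

/-- The automorphism `xᵢ ↦ xᵢ v` fixing the other letters. -/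
def rightMul (i : ι) : CoFree i →* MulAut (FreeGroup ι) := (bothMul i).comp (MonoidHom.inr _ _)

/-- The automorphism `xᵢ ↦ u⁻¹ xᵢ` fixing the other letters. -/
def leftMul (i : ι) : CoFree i →* MulAut (FreeGroup ι) := (bothMul i).comp (MonoidHom.inl _ _)

/-- The automorphism `xᵢ ↦ w⁻¹ xᵢ w` fixing the other letters. -/
def partialConj (i : ι) : CoFree i →* MulAut (FreeGroup ι) :=
  (bothMul i).comp ((MonoidHom.id _).prod (MonoidHom.id _))

theorem rightMul_apply (i : ι) (v : CoFree i) : rightMul i v = bothMul i (1, v) := rfl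

theorem leftMul_apply (i : ι) (u : CoFree i) : leftMul i u = bothMul i (u, 1) := rfl

theorem partialConj_apply (i : ι) (w : CoFree i) : partialConj i w = bothMul i (w, w) := rfl

theorem partialConj_eq_leftMul_mul_rightMul (i : ι) (w : CoFree i) :
    partialConj i w = leftMul i w * rightMul i w := by
  rw [partialConj_apply, leftMul_apply, rightMul_apply, ← map_mul]
  simp

theorem leftMul_commute_rightMul (i : ι) (u v : CoFree i) :
    Commute (leftMul i u) (rightMul i v) := by
  rw [commute_iff_eq, leftMul_apply, rightMul_apply, ← map_mul, ← map_mul]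
  simp

theorem partialConj_conj_rightMul (i : ι) (w v : CoFree i) :
    partialConj i w * rightMul i v * (partialConj i w)⁻¹ = rightMul i (w * v * w⁻¹) := by
  rw [partialConj_apply, rightMul_apply, rightMul_apply, ← map_mul, ← map_inv, ← map_mul]
  simp

/-- The transvection `xᵢ ↦ xᵢ xⱼ`. -/
def transvection {i j : ι} (h : i ≠ j) : MulAut (FreeGroup ι) := rightMul i (letter h)

/-- The transvection `xᵢ ↦ xⱼ⁻¹ xᵢ`. -/
def leftTransvection {i j : ι} (h : i ≠ j) : MulAut (FreeGroup ι) := leftMul i (letter h)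

/-- The partial conjugation `xᵢ ↦ xⱼ⁻¹ xᵢ xⱼ`. -/
def letterConj {i j : ι} (h : i ≠ j) : MulAut (FreeGroup ι) := partialConj i (letter h)

theorem letterConj_eq_leftTransvection_mul_transvection {i j : ι} (h : i ≠ j) :
    letterConj h = leftTransvection h * transvection h :=
  partialConj_eq_leftMul_mul_rightMul i _

@[simp] theorem transvection_self {i j : ι} (h : i ≠ j) :
    transvection h (of i) = of i * of j := by
  simp [transvection, rightMul_apply]

theorem transvection_of_ne {i j k : ι} (h : i ≠ j) (hk : i ≠ k) :
    transvection h (of k) = of k := bothMul_of_ne hk _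

@[simp] theorem leftTransvection_self {i j : ι} (h : i ≠ j) :
    leftTransvection h (of i) = (of j)⁻¹ * of i := by
  simp [leftTransvection, leftMul_apply]

theorem leftTransvection_of_ne {i j k : ι} (h : i ≠ j) (hk : i ≠ k) :
    leftTransvection h (of k) = of k := bothMul_of_ne hk _

@[simp] theorem letterConj_self {i j : ι} (h : i ≠ j) :
    letterConj h (of i) = (of j)⁻¹ * of i * of j := by
  simp [letterConj, partialConj_apply]

theorem letterConj_of_ne {i j k : ι} (h : i ≠ j) (hk : i ≠ k) :
    letterConj h (of k) = of k := bothMul_of_ne hk _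

/-- The endomorphism underlying `extend`. -/
def extendHom (i : ι) (ν : MulAut (CoFree i)) : FreeGroup ι →* FreeGroup ι :=
  FreeGroup.lift fun j => if h : i ≠ j then incl i (ν (letter h)) else of j

theorem extendHom_self (i : ι) (ν : MulAut (CoFree i)) : extendHom i ν (of i) = of i := by
  simp [extendHom]

theorem extendHom_incl (i : ι) (ν : MulAut (CoFree i)) (w : CoFree i) :
    extendHom i ν (incl i w) = incl i (ν w) := by
  have : (extendHom i ν).comp (incl i) = (incl i).comp ν.toMonoidHom :=
    FreeGroup.ext_hom _ _ fun j => by simp [extendHom, letter, j.2]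
  exact DFunLike.congr_fun this w

theorem extendHom_comp (i : ι) (μ ν : MulAut (CoFree i)) :
    (extendHom i μ).comp (extendHom i ν) = extendHom i (μ * ν) :=
  hom_ext_incl i (by simp [extendHom_self]) fun w => by simp [extendHom_incl]

theorem extendHom_one (i : ι) : extendHom i 1 = MonoidHom.id _ :=
  hom_ext_incl i (by simp [extendHom_self]) fun w => by simp [extendHom_incl]

/-- The extension of an automorphism of the free group on the letters other than `i` by
`xᵢ ↦ xᵢ`. -/
def extend (i : ι) : MulAut (CoFree i) →* MulAut (FreeGroup ι) where
  toFun ν := MonoidHom.toMulEquiv (extendHom i ν) (extendHom i ν⁻¹)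
    (by rw [extendHom_comp, inv_mul_cancel, extendHom_one])
    (by rw [extendHom_comp, mul_inv_cancel, extendHom_one])
  map_one' := MulEquiv.toMonoidHom_injective (extendHom_one i)
  map_mul' μ ν := MulEquiv.toMonoidHom_injective (extendHom_comp i μ ν).symm

@[simp] theorem extend_self (i : ι) (ν : MulAut (CoFree i)) : extend i ν (of i) = of i :=
  extendHom_self i ν

@[simp] theorem extend_incl (i : ι) (ν : MulAut (CoFree i)) (w : CoFree i) :
    extend i ν (incl i w) = incl i (ν w) := extendHom_incl i ν w

theorem extend_of_ne {i j : ι} (h : i ≠ j) (ν : MulAut (CoFree i)) :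
    extend i ν (of j) = incl i (ν (letter h)) := by
  rw [← extend_incl, incl_letter]

theorem extend_conj_bothMul (i : ι) (ν : MulAut (CoFree i)) (u v : CoFree i) :
    extend i ν * bothMul i (u, v) * (extend i ν)⁻¹ = bothMul i (ν u, ν v) := by
  rw [mul_inv_eq_iff_eq_mul]
  exact autExt_incl i (by simp) fun w => by simp

theorem extend_conj_rightMul (i : ι) (ν : MulAut (CoFree i)) (v : CoFree i) :
    extend i ν * rightMul i v * (extend i ν)⁻¹ = rightMul i (ν v) := by
  simp [rightMul_apply, extend_conj_bothMul]

theorem extend_conj_partialConj (i : ι) (ν : MulAut (CoFree i)) (w : CoFree i) :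
    extend i ν * partialConj i w * (extend i ν)⁻¹ = partialConj i (ν w) := by
  simp [partialConj_apply, extend_conj_bothMul]

theorem extend_conj (i : ι) (w : CoFree i) :
    extend i (MulAut.conj w) = MulAut.conj (incl i w) * partialConj i w :=
  autExt_incl i (by simp [partialConj_apply, mul_assoc])
    fun v => by simp [partialConj_apply]

theorem extend_transvection {i j k : ι} (hj : i ≠ j) (hk : i ≠ k) (h : j ≠ k) :
    extend i (transvection (i := (⟨j, hj⟩ : {x // i ≠ x})) (j := ⟨k, hk⟩) (by simpa using h)) =
      transvection h := by
  refine aut_ext fun l => ?_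
  obtain rfl | hl := eq_or_ne i l
  · rw [extend_self, transvection_of_ne _ hj.symm]
  rw [extend_of_ne hl, letter]
  obtain rfl | hlj := eq_or_ne j l
  · simp
  · rw [transvection_of_ne _ (by simpa using hlj), transvection_of_ne _ hlj, incl_of]

theorem extend_letterConj {i j k : ι} (hj : i ≠ j) (hk : i ≠ k) (h : j ≠ k) :
    extend i (letterConj (i := (⟨j, hj⟩ : {x // i ≠ x})) (j := ⟨k, hk⟩) (by simpa using h)) =
      letterConj h := by
  refine aut_ext fun l => ?_
  obtain rfl | hl := eq_or_ne i l
  · rw [extend_self, letterConj_of_ne _ hj.symm]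
  rw [extend_of_ne hl, letter]
  obtain rfl | hlj := eq_or_ne j l
  · simp
  · rw [letterConj_of_ne _ (by simpa using hlj), letterConj_of_ne _ hlj, incl_of]

end Generators

/-! ### Nielsen reduction -/

section GromovProduct

variable {ι : Type*}

theorem exists_maximal_common_prefix {α : Type*} (l m : List α) :
    ∃ p a b, l = p ++ a ∧ m = p ++ b ∧ ∀ x ∈ a.head?, ∀ y ∈ b.head?, x ≠ y := by
  induction l generalizing m with
  | nil => exact ⟨[], [], m, by simp⟩
  | cons x l ih =>
    obtain _ | ⟨y, m⟩ := m
    · exact ⟨[], x :: l, [], by simp⟩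
    obtain rfl | h := eq_or_ne x y
    · obtain ⟨p, a, b, hl, hm, hab⟩ := ih m
      exact ⟨x :: p, a, b, by simp [hl], by simp [hm], hab⟩
    · exact ⟨[], x :: l, y :: m, by simpa using h⟩

theorem isReduced_invRev_append {a b : List (ι × Bool)} (ha : FreeGroup.IsReduced a)
    (hb : FreeGroup.IsReduced b) (h : ∀ x ∈ a.head?, ∀ y ∈ b.head?, x ≠ y) :
    FreeGroup.IsReduced (FreeGroup.invRev a ++ b) := by
  classical
  have ha' : FreeGroup.IsReduced (FreeGroup.invRev a) := by
    rw [FreeGroup.isReduced_iff_reduce_eq, FreeGroup.reduce_invRev, ha.reduce_eq]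
  refine List.isChain_append.2 ⟨ha', hb, fun x hx y hy hxy => ?_⟩
  obtain _ | ⟨z, a⟩ := a
  · simp [FreeGroup.invRev] at hx
  have hz : x = (z.1, !z.2) := by simpa [FreeGroup.invRev, eq_comm] using hx
  subst hz
  have hne : z.2 ≠ y.2 := fun h2 => h z (by simp) y hy (Prod.ext hxy h2)
  exact Bool.not_eq.2 hne

variable [DecidableEq ι]

theorem mk_take_mul_mk_drop (u : FreeGroup ι) (k : ℕ) :
    FreeGroup.mk (u.toWord.take k) * FreeGroup.mk (u.toWord.drop k) = u := by
  rw [FreeGroup.mul_mk, List.take_append_drop, FreeGroup.mk_toWord]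

theorem exists_toWord_inv_mul (u v : FreeGroup ι) :
    ∃ p a b, u.toWord = p ++ a ∧ v.toWord = p ++ b ∧
      (u⁻¹ * v).toWord = FreeGroup.invRev a ++ b := by
  obtain ⟨p, a, b, hu, hv, h⟩ := exists_maximal_common_prefix u.toWord v.toWord
  refine ⟨p, a, b, hu, hv, ?_⟩
  have ha : FreeGroup.IsReduced a :=
    (hu ▸ FreeGroup.isReduced_toWord (x := u)).infix (List.suffix_append p a).isInfix
  have hb : FreeGroup.IsReduced b :=
    (hv ▸ FreeGroup.isReduced_toWord (x := v)).infix (List.suffix_append p b).isInfix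
  have huv : u⁻¹ * v = FreeGroup.mk (FreeGroup.invRev a ++ b) := by
    rw [← FreeGroup.mk_toWord (x := u), ← FreeGroup.mk_toWord (x := v), hu, hv,
      ← FreeGroup.mul_mk, ← FreeGroup.mul_mk, ← FreeGroup.mul_mk, ← FreeGroup.inv_mk]
    group
  rw [huv, FreeGroup.toWord_mk, (isReduced_invRev_append ha hb h).reduce_eq]

/-- The Gromov product of `u` and `v` in the Cayley tree based at `1`, i.e. the length of the
longest common prefix of the reduced words of `u` and `v`; the division by `2` is exact. -/
def gromovProd (u v : FreeGroup ι) : ℕ := (u.norm + v.norm - (u⁻¹ * v).norm) / 2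

theorem two_mul_gromovProd_add_norm (u v : FreeGroup ι) :
    2 * gromovProd u v + (u⁻¹ * v).norm = u.norm + v.norm := by
  obtain ⟨p, a, b, hu, hv, huv⟩ := exists_toWord_inv_mul u v
  simp only [gromovProd, FreeGroup.norm, hu, hv, huv, List.length_append,
    FreeGroup.invRev_length]
  omega

theorem two_mul_gromovProd_inv_add_norm (u v : FreeGroup ι) :
    2 * gromovProd u⁻¹ v + (u * v).norm = u.norm + v.norm := by
  simpa using two_mul_gromovProd_add_norm u⁻¹ v

theorem gromovProd_comm (u v : FreeGroup ι) : gromovProd u v = gromovProd v u := by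
  have h : (u⁻¹ * v).norm = (v⁻¹ * u).norm := by rw [← FreeGroup.norm_inv_eq]; simp
  rw [gromovProd, gromovProd, h, add_comm]

theorem le_gromovProd_iff {u v : FreeGroup ι} {k : ℕ} :
    k ≤ gromovProd u v ↔ k ≤ u.norm ∧ k ≤ v.norm ∧ u.toWord.take k = v.toWord.take k := by
  have huv := two_mul_gromovProd_add_norm u v
  constructor
  · obtain ⟨p, a, b, hu, hv, hw⟩ := exists_toWord_inv_mul u v
    simp only [FreeGroup.norm, hu, hv, hw, List.length_append, FreeGroup.invRev_length] at huv ⊢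
    intro hk
    refine ⟨by omega, by omega, ?_⟩
    rw [List.take_append_of_le_length (by omega), List.take_append_of_le_length (by omega)]
  · rintro ⟨hu, hv, h⟩
    have hu' := mk_take_mul_mk_drop u k
    have hv' := mk_take_mul_mk_drop v k
    have hmul : u⁻¹ * v = FreeGroup.mk (FreeGroup.invRev (u.toWord.drop k) ++ v.toWord.drop k) := by
      rw [← FreeGroup.mul_mk, ← FreeGroup.inv_mk, eq_inv_mul_of_mul_eq hu',
        eq_inv_mul_of_mul_eq hv', h]
      group
    have hle := FreeGroup.norm_mk_le
      (L₁ := FreeGroup.invRev (u.toWord.drop k) ++ v.toWord.drop k)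
    rw [← hmul, List.length_append, FreeGroup.invRev_length, List.length_drop,
      List.length_drop] at hle
    simp only [FreeGroup.norm] at *
    omega

theorem le_gromovProd_of_le_of_le {u v w : FreeGroup ι} {k : ℕ} (huv : k ≤ gromovProd u v)
    (hvw : k ≤ gromovProd v w) : k ≤ gromovProd u w := by
  rw [le_gromovProd_iff] at *
  exact ⟨huv.1, hvw.2.1, huv.2.2.trans hvw.2.2⟩

theorem gromovProd_eq_of_lt {u v w : FreeGroup ι} (h : gromovProd u v < gromovProd v w) :
    gromovProd u w = gromovProd u v := by
  refine le_antisymm (not_lt.1 fun huw => ?_) (le_gromovProd_of_le_of_le le_rfl h.le)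
  rw [gromovProd_comm v w] at h
  exact (le_gromovProd_of_le_of_le (Nat.succ_le_of_lt huw) h).not_gt (Nat.lt_succ_self _)

theorem norm_lt_norm_mul_self {u : FreeGroup ι} (h : u ≠ 1) : u.norm < (u * u).norm := by
  have hred := FreeGroup.isReduced_toWord (x := u)
  have hu := FreeGroup.reduceCyclically.conj_conjugator_reduceCyclically u.toWord
  have huu := FreeGroup.reduceCyclically.reduce_flatten_replicate_succ hred 1
  have hne : FreeGroup.reduceCyclically u.toWord ≠ [] := by
    intro hnil
    rw [hnil] at hu
    refine h ?_
    rw [← FreeGroup.mk_toWord (x := u), ← hu, List.append_nil, ← FreeGroup.mul_mk,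
      ← FreeGroup.inv_mk, mul_inv_cancel]
  have hu' := congrArg List.length hu
  rw [← FreeGroup.toWord_pow, pow_succ, pow_one] at huu
  have huu' := congrArg List.length huu
  simp only [List.replicate_succ, List.replicate_zero, List.flatten_cons, List.flatten_nil,
    List.append_nil, List.length_append, FreeGroup.invRev_length] at hu' huu'
  have := List.length_pos_iff.2 hne
  simp only [FreeGroup.norm]
  omega

theorem two_mul_gromovProd_inv_self_lt {u : FreeGroup ι} (h : u ≠ 1) :
    2 * gromovProd u⁻¹ u < u.norm := by
  have := two_mul_gromovProd_inv_add_norm u u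
  have := norm_lt_norm_mul_self h
  omega

theorem toWord_mul_eq_take_append_drop (u v : FreeGroup ι) :
    (u * v).toWord = u.toWord.take (u.norm - gromovProd u⁻¹ v) ++
      v.toWord.drop (gromovProd u⁻¹ v) := by
  obtain ⟨p, a, b, hu, hv, huv⟩ := exists_toWord_inv_mul u⁻¹ v
  have hu' : u.toWord = FreeGroup.invRev a ++ FreeGroup.invRev p := by
    rw [← inv_inv u, FreeGroup.toWord_inv, hu, FreeGroup.invRev_append]
  have hk := two_mul_gromovProd_inv_add_norm u v
  rw [inv_inv] at huv
  simp only [FreeGroup.norm, hu', hv, huv, List.length_append, FreeGroup.invRev_length] at hk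
  have hp : gromovProd u⁻¹ v = p.length := by omega
  rw [huv, hu', hv, hp, FreeGroup.norm, hu', List.length_append, FreeGroup.invRev_length (L₁ := p),
    Nat.add_sub_cancel, List.drop_left, List.take_left]

end GromovProduct

section NielsenReduction

variable {ι κ : Type*}

/-- The inverse of a signed letter. -/
def flip (s : ι × Bool) : ι × Bool := (s.1, !s.2)

@[simp] theorem flip_flip (s : ι × Bool) : flip (flip s) = s := by simp [flip]

theorem eq_or_fst_ne_of_ne_flip {s t : ι × Bool} (h : t ≠ flip s) : t = s ∨ s.1 ≠ t.1 := by
  obtain ⟨i, a⟩ := s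
  obtain ⟨j, b⟩ := t
  cases a <;> cases b <;> simp_all [flip, Prod.ext_iff, eq_comm, em]

/-- A signed letter as an element of the free group. -/
def signed (s : ι × Bool) : FreeGroup ι := FreeGroup.mk [s]

@[simp] theorem signed_true (i : ι) : signed (i, true) = of i := rfl

@[simp] theorem signed_false (i : ι) : signed (i, false) = (of i)⁻¹ := rfl

@[simp] theorem signed_flip (s : ι × Bool) : signed (flip s) = (signed s)⁻¹ := by
  simp [signed, flip, FreeGroup.inv_mk, FreeGroup.invRev]

theorem mk_cons_eq_signed_mul (s : ι × Bool) (l : List (ι × Bool)) :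
    FreeGroup.mk (s :: l) = signed s * FreeGroup.mk l := by
  simp [signed]

theorem signed_ne_one (s : ι × Bool) : signed s ≠ 1 := by
  obtain ⟨i, _ | _⟩ := s <;> simp

theorem ne_flip_of_isReduced_cons_cons {s t : ι × Bool} {l : List (ι × Bool)}
    (h : FreeGroup.IsReduced (s :: t :: l)) : t ≠ flip s := by
  rintro rfl
  simpa [flip] using (List.isChain_cons_cons.1 h).1

variable [DecidableEq κ]

/-- Nielsen's condition on the images of the letters: in a product of images of signed letters
along a reduced word at most half of each factor cancels against either neighbour, and no factor
is swallowed by its two neighbours. -/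
structure IsNielsenReduced (f : FreeGroup ι →* FreeGroup κ) : Prop where
  two_mul_le : ∀ s t, t ≠ flip s →
    2 * gromovProd (f (signed s))⁻¹ (f (signed t)) ≤ (f (signed t)).norm
  add_lt : ∀ r s t, s ≠ flip r → t ≠ flip s →
    gromovProd (f (signed r))⁻¹ (f (signed s)) + gromovProd (f (signed s))⁻¹ (f (signed t)) <
      (f (signed s)).norm

namespace IsNielsenReduced

variable {f : FreeGroup ι →* FreeGroup κ}

theorem two_mul_le_left (hf : IsNielsenReduced f) {s t : ι × Bool} (h : t ≠ flip s) :
    2 * gromovProd (f (signed s))⁻¹ (f (signed t)) ≤ (f (signed s)).norm := by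
  have := hf.two_mul_le (flip t) (flip s) (by simpa using h.symm)
  simpa [gromovProd_comm] using this

theorem gromovProd_eq_and_norm_le (hf : IsNielsenReduced f) {s : ι × Bool}
    {l : List (ι × Bool)} (hl : FreeGroup.IsReduced (s :: l)) :
    (∀ r, s ≠ flip r → gromovProd (f (signed r))⁻¹ (f (FreeGroup.mk (s :: l))) =
      gromovProd (f (signed r))⁻¹ (f (signed s))) ∧
    ∀ t ∈ s :: l, (f (signed t)).norm ≤ (f (FreeGroup.mk (s :: l))).norm := by
  induction l generalizing s with
  | nil => simp [signed]
  | cons t l ih =>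
    have hst := ne_flip_of_isReduced_cons_cons hl
    obtain ⟨hgp, hnorm⟩ := ih (List.isChain_cons_cons.1 hl).2
    rw [mk_cons_eq_signed_mul s, map_mul]
    set v := f (FreeGroup.mk (t :: l))
    have hsv : gromovProd (f (signed s))⁻¹ v = gromovProd (f (signed s))⁻¹ (f (signed t)) :=
      hgp s hst
    have hmul := two_mul_gromovProd_inv_add_norm (f (signed s)) v
    have hmul' := two_mul_gromovProd_add_norm (f (signed s)) (f (signed s) * v)
    rw [inv_mul_cancel_left] at hmul'
    have hleft := hf.two_mul_le_left hst
    have hright := hf.two_mul_le s t hst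
    have ht := hnorm t (by simp)
    refine ⟨fun r hr => gromovProd_eq_of_lt ?_, List.forall_mem_cons.2 ⟨by omega, fun x hx => ?_⟩⟩
    · have := hf.add_lt r s t hr hst
      omega
    · have := hnorm x hx
      omega

variable [DecidableEq ι]

theorem norm_le_of_mem_toWord (hf : IsNielsenReduced f) (w : FreeGroup ι) :
    ∀ t ∈ w.toWord, (f (signed t)).norm ≤ (f w).norm := by
  have hred := FreeGroup.isReduced_toWord (x := w)
  rw [← FreeGroup.mk_toWord (x := w)]
  generalize w.toWord = l at *
  obtain _ | ⟨s, l⟩ := l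
  · simp
  · rw [FreeGroup.toWord_mk, hred.reduce_eq]
    exact (hf.gromovProd_eq_and_norm_le hred).2

end IsNielsenReduced

variable [DecidableEq ι]

theorem apply_eq_one_of_forall_mem_toWord {G : Type*} [Group G] (χ : FreeGroup ι →* G)
    (w : FreeGroup ι) (h : ∀ t ∈ w.toWord, χ (signed t) = 1) : χ w = 1 := by
  rw [← FreeGroup.mk_toWord (x := w)]
  generalize w.toWord = l at h
  induction l with
  | nil => rw [← FreeGroup.one_eq_mk, map_one]
  | cons t l ih =>
    rw [List.forall_mem_cons] at h
    rw [mk_cons_eq_signed_mul, map_mul, h.1, ih h.2, one_mul]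

theorem norm_le_one_of_isNielsenReduced {α : MulAut (FreeGroup ι)}
    (hα : IsNielsenReduced α.toMonoidHom) (i : ι) : (α (of i)).norm ≤ 1 := by
  by_contra hi
  let χ : FreeGroup ι →* Multiplicative ℤ := FreeGroup.lift (Pi.mulSingle i (.ofAdd 1))
  have hχ : χ.comp (α⁻¹ : MulAut (FreeGroup ι)).toMonoidHom = 1 := by
    refine FreeGroup.ext_hom _ _ fun j => apply_eq_one_of_forall_mem_toWord χ _ fun t ht => ?_
    have hnorm := hα.norm_le_of_mem_toWord (α⁻¹ (of j)) t ht
    have hti : t.1 ≠ i := by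
      rintro rfl
      refine hi ?_
      obtain ⟨k, _ | _⟩ := t <;> simpa using hnorm
    obtain ⟨k, _ | _⟩ := t <;> simpa [χ] using Pi.mulSingle_eq_of_ne hti _
  simpa [χ] using DFunLike.congr_fun hχ (α (of i))

end NielsenReduction

section Complexity

variable {ι κ : Type*} [Fintype κ]

/-- An injective numbering of the words of a given length. -/
def wordCode (l : List (κ × Bool)) : ℕ :=
  Nat.ofDigits (Fintype.card (κ × Bool) + 2) (l.map fun s => (Fintype.equivFin (κ × Bool) s : ℕ))

theorem wordCode_append (l m : List (κ × Bool)) :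
    wordCode (l ++ m) = wordCode l + (Fintype.card (κ × Bool) + 2) ^ l.length * wordCode m := by
  simp [wordCode, Nat.ofDigits_append]

theorem eq_of_wordCode_eq {l m : List (κ × Bool)} (hlen : l.length = m.length)
    (h : wordCode l = wordCode m) : l = m := by
  have hdigits : ∀ l : List (κ × Bool),
      ∀ d ∈ l.map fun s => (Fintype.equivFin (κ × Bool) s : ℕ),
        d < Fintype.card (κ × Bool) + 2 := by
    intro l d hd
    obtain ⟨s, -, rfl⟩ := List.mem_map.1 hd
    exact (Fintype.equivFin (κ × Bool) s).2.trans (by omega)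
  exact List.map_injective_iff.2 (Fin.val_injective.comp (Fintype.equivFin _).injective)
    (Nat.ofDigits_inj_of_len_eq (by omega) (by simpa using hlen) (hdigits l) (hdigits m) h)

variable [DecidableEq κ]

/-- The code of the initial half (rounded up) of the reduced word of `w`. -/
def initialCode (w : FreeGroup κ) : ℕ := wordCode (w.toWord.take ((w.norm + 1) / 2))

/-- The codes of the initial half of `w` and of the final half of `w`, read backwards. -/
def halvesCode (w : FreeGroup κ) : ℕ := initialCode w + initialCode w⁻¹

theorem halvesCode_inv (w : FreeGroup κ) : halvesCode w⁻¹ = halvesCode w := by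
  simp [halvesCode, add_comm]

theorem initialCode_of_toWord_eq_append {w : FreeGroup κ} {a y : List (κ × Bool)}
    (h : w.toWord = a ++ y) (hay : a.length ≤ y.length) :
    initialCode w = wordCode a + (Fintype.card (κ × Bool) + 2) ^ a.length *
      wordCode (y.take ((a.length + y.length + 1) / 2 - a.length)) := by
  rw [initialCode, FreeGroup.norm, h, List.length_append, List.take_append,
    List.take_of_length_le (by omega), wordCode_append]

theorem initialCode_inv_of_toWord_eq_append {w : FreeGroup κ} {a y : List (κ × Bool)}
    (h : w.toWord = a ++ y) (hay : a.length ≤ y.length) :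
    initialCode w⁻¹ =
      wordCode ((FreeGroup.invRev y).take ((a.length + y.length + 1) / 2)) := by
  rw [initialCode, FreeGroup.norm_inv_eq, FreeGroup.norm, FreeGroup.toWord_inv, h,
    FreeGroup.invRev_append, List.length_append,
    List.take_append_of_le_length (by rw [FreeGroup.invRev_length]; omega)]

theorem wordCode_le_of_halvesCode_le {v w : FreeGroup κ} {a b y : List (κ × Bool)}
    (hv : v.toWord = a ++ y) (hw : w.toWord = b ++ y) (hab : a.length = b.length)
    (hay : a.length ≤ y.length) (h : halvesCode v ≤ halvesCode w) : wordCode a ≤ wordCode b := by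
  rw [halvesCode, halvesCode, initialCode_of_toWord_eq_append hv hay,
    initialCode_inv_of_toWord_eq_append hv hay, initialCode_of_toWord_eq_append hw (hab ▸ hay),
    initialCode_inv_of_toWord_eq_append hw (hab ▸ hay), hab] at h
  omega

theorem wordCode_take_inv_le {g w : FreeGroup κ} {q : ℕ} (hg : g.norm = 2 * q)
    (hgw : gromovProd g⁻¹ w = q) (hw : 2 * q ≤ w.norm) (h : halvesCode w ≤ halvesCode (g * w)) :
    wordCode (g⁻¹.toWord.take q) ≤ wordCode (g.toWord.take q) := by
  obtain ⟨-, -, hprefix⟩ := le_gromovProd_iff.1 hgw.ge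
  have hmul := toWord_mul_eq_take_append_drop g w
  rw [hgw, show g.norm - q = q by omega] at hmul
  simp only [FreeGroup.norm] at hg hw
  rw [hprefix]
  refine wordCode_le_of_halvesCode_le (List.take_append_drop q w.toWord).symm hmul ?_ ?_ h <;>
    simp only [List.length_take, List.length_drop] <;> omega

/-- The reduced length, refined by the codes of the two halves of the reduced word; Nielsen
reduction decreases the total complexity of a basis. -/
def complexity (w : FreeGroup κ) : ℕ ×ₗ ℕ := toLex (w.norm, halvesCode w)

theorem complexity_inv (w : FreeGroup κ) : complexity w⁻¹ = complexity w := by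
  simp [complexity, halvesCode_inv]

theorem norm_le_of_complexity_le {v w : FreeGroup κ} (h : complexity v ≤ complexity w) :
    v.norm ≤ w.norm :=
  (Prod.Lex.toLex_le_toLex.1 h).elim le_of_lt fun h => h.1.le

theorem halvesCode_le_of_complexity_le {v w : FreeGroup κ} (h : complexity v ≤ complexity w)
    (hvw : w.norm = v.norm) : halvesCode v ≤ halvesCode w :=
  (Prod.Lex.toLex_le_toLex.1 h).elim (fun h => absurd h hvw.not_gt) fun h => h.2

/-- No elementary Nielsen transformation decreases the complexity of the images of the letters. -/
def IsNielsenMinimal (f : FreeGroup ι →* FreeGroup κ) : Prop :=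
  ∀ s t : ι × Bool, s.1 ≠ t.1 →
    complexity (f (signed s)) ≤ complexity (f (signed s) * f (signed t))

namespace IsNielsenMinimal

variable {f : FreeGroup ι →* FreeGroup κ}

theorem two_mul_gromovProd_le (hf : IsNielsenMinimal f) (hne : ∀ s, f (signed s) ≠ 1)
    {s t : ι × Bool} (hst : t ≠ flip s) :
    2 * gromovProd (f (signed s))⁻¹ (f (signed t)) ≤ (f (signed t)).norm := by
  obtain rfl | h := eq_or_fst_ne_of_ne_flip hst
  · exact (two_mul_gromovProd_inv_self_lt (hne t)).le
  · have := norm_le_of_complexity_le (hf s t h)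
    have := two_mul_gromovProd_inv_add_norm (f (signed s)) (f (signed t))
    omega

theorem complexity_right_le (hf : IsNielsenMinimal f) {s t : ι × Bool} (h : s.1 ≠ t.1) :
    complexity (f (signed t)) ≤ complexity (f (signed s) * f (signed t)) := by
  have := hf (flip t) (flip s) h.symm
  rwa [signed_flip, signed_flip, map_inv, map_inv, ← mul_inv_rev, complexity_inv,
    complexity_inv] at this

theorem wordCode_take_inv_le (hf : IsNielsenMinimal f) (hne : ∀ s, f (signed s) ≠ 1)
    {s t : ι × Bool} (hst : t ≠ flip s) {q : ℕ} (hs : (f (signed s)).norm = 2 * q)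
    (hq : gromovProd (f (signed s))⁻¹ (f (signed t)) = q) :
    wordCode ((f (signed s))⁻¹.toWord.take q) ≤ wordCode ((f (signed s)).toWord.take q) := by
  obtain rfl | h := eq_or_fst_ne_of_ne_flip hst
  · have := two_mul_gromovProd_inv_self_lt (hne t)
    omega
  · have hmul := two_mul_gromovProd_inv_add_norm (f (signed s)) (f (signed t))
    have hright := hf.two_mul_gromovProd_le hne hst
    exact FreeAut.wordCode_take_inv_le hs hq (by omega)
      (halvesCode_le_of_complexity_le (hf.complexity_right_le h) (by omega))

-- If `f s` were swallowed by its neighbours, it would be `a b⁻¹` with `a` and `b` of length `q`;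
-- neither replacing `b` by `a` nor replacing `a` by `b` decreases the code, so `a = b`.
theorem isNielsenReduced (hf : IsNielsenMinimal f) (hne : ∀ s, f (signed s) ≠ 1) :
    IsNielsenReduced f := by
  refine ⟨fun s t => hf.two_mul_gromovProd_le hne, fun r s t hrs hst => ?_⟩
  by_contra hlt
  have hsr : flip r ≠ flip (flip s) := by simpa using hrs.symm
  have hst' : flip s ≠ flip (flip t) := by simpa using hst.symm
  have hright := hf.two_mul_gromovProd_le hne hrs
  have hleft := hf.two_mul_gromovProd_le hne hst'
  simp only [signed_flip, map_inv, inv_inv, FreeGroup.norm_inv_eq] at hleft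
  rw [gromovProd_comm] at hleft
  set q := gromovProd (f (signed s))⁻¹ (f (signed t)) with hq
  have hs : (f (signed s)).norm = 2 * q := by omega
  have hq' : gromovProd (f (signed s)) (f (signed r))⁻¹ = q := by
    rw [gromovProd_comm]
    omega
  have hle := hf.wordCode_take_inv_le hne hst hs hq.symm
  have hge := hf.wordCode_take_inv_le hne (q := q) hsr (by simpa using hs) (by simpa using hq')
  simp only [signed_flip, map_inv, inv_inv] at hge
  have hprefix := eq_of_wordCode_eq (by simp) (le_antisymm hle hge)
  have hswallow : q ≤ gromovProd (f (signed s))⁻¹ (f (signed s)) :=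
    le_gromovProd_iff.2 ⟨by rw [FreeGroup.norm_inv_eq]; omega, by omega, hprefix⟩
  have := two_mul_gromovProd_inv_self_lt (hne s)
  omega

end IsNielsenMinimal

end Complexity

section TransvectionSubgroup

variable {ι : Type*} [DecidableEq ι]

variable (ι) in
/-- The transvections `xᵢ ↦ xᵢ xⱼ` and `xᵢ ↦ xⱼ⁻¹ xᵢ`. -/
def transvections : Set (MulAut (FreeGroup ι)) :=
  {α | ∃ (i j : ι) (h : i ≠ j), α = transvection h ∨ α = leftTransvection h}

variable (ι) in
/-- The subgroup generated by the transvections. -/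
def transvectionSubgroup : Subgroup (MulAut (FreeGroup ι)) :=
  Subgroup.closure (transvections ι)

theorem transvection_mem {i j : ι} (h : i ≠ j) : transvection h ∈ transvectionSubgroup ι :=
  Subgroup.subset_closure ⟨i, j, h, .inl rfl⟩

theorem leftTransvection_mem {i j : ι} (h : i ≠ j) :
    leftTransvection h ∈ transvectionSubgroup ι :=
  Subgroup.subset_closure ⟨i, j, h, .inr rfl⟩

theorem finite_transvections [Finite ι] : (transvections ι).Finite := by
  have hfin := (Set.finite_range fun p : {p : ι × ι // p.1 ≠ p.2} => transvection p.2).union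
    (Set.finite_range fun p : {p : ι × ι // p.1 ≠ p.2} => leftTransvection p.2)
  refine hfin.subset ?_
  rintro _ ⟨i, j, h, rfl | rfl⟩
  · exact .inl ⟨⟨(i, j), h⟩, rfl⟩
  · exact .inr ⟨⟨(i, j), h⟩, rfl⟩

theorem exists_mem_transvectionSubgroup_apply_signed {s t : ι × Bool} (h : s.1 ≠ t.1) :
    ∃ τ ∈ transvectionSubgroup ι, τ (signed s) = signed s * signed t ∧
      ∀ k, s.1 ≠ k → τ (of k) = of k := by
  obtain ⟨i, _ | _⟩ := s <;> obtain ⟨j, _ | _⟩ := t <;> simp only at h <;>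
    simp only [signed_false, signed_true]
  · refine ⟨(leftTransvection h)⁻¹, inv_mem (leftTransvection_mem h), ?_,
      fun k hk => inv_apply_eq_of_apply_eq (leftTransvection_of_ne h hk)⟩
    rw [← (leftTransvection h).injective.eq_iff]
    simp [leftTransvection_of_ne h h]
  · exact ⟨leftTransvection h, leftTransvection_mem h, by simp,
      fun k hk => leftTransvection_of_ne h hk⟩
  · refine ⟨(transvection h)⁻¹, inv_mem (transvection_mem h), ?_,
      fun k hk => inv_apply_eq_of_apply_eq (transvection_of_ne h hk)⟩
    rw [← (transvection h).injective.eq_iff]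
    simp [transvection_of_ne h h]
  · exact ⟨transvection h, transvection_mem h, by simp, fun k hk => transvection_of_ne h hk⟩

omit [DecidableEq ι] in
theorem sum_apply_mul_add {M : Type*} [AddCommMonoid M] [Fintype ι] (Ψ : FreeGroup ι → M)
    (hΨ : ∀ x, Ψ x⁻¹ = Ψ x) (α τ : MulAut (FreeGroup ι)) {s t : ι × Bool}
    (hs : τ (signed s) = signed s * signed t) (hτ : ∀ k, s.1 ≠ k → τ (of k) = of k) :
    (∑ i, Ψ ((α * τ) (of i))) + Ψ (α (signed s)) =
      (∑ i, Ψ (α (of i))) + Ψ (α (signed s) * α (signed t)) := by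
  classical
  have hsigned : ∀ β : MulAut (FreeGroup ι), Ψ (β (signed s)) = Ψ (β (of s.1)) := by
    intro β
    obtain ⟨i, _ | _⟩ := s <;> simp [hΨ]
  have hrest : ∑ i ∈ Finset.univ.erase s.1, Ψ ((α * τ) (of i)) =
      ∑ i ∈ Finset.univ.erase s.1, Ψ (α (of i)) :=
    Finset.sum_congr rfl fun i hi => by
      rw [MulAut.mul_apply, hτ i (Finset.ne_of_mem_erase hi).symm]
  rw [← Finset.add_sum_erase Finset.univ _ (Finset.mem_univ s.1),
    ← Finset.add_sum_erase Finset.univ (fun i => Ψ (α (of i))) (Finset.mem_univ s.1), hrest,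
    ← hsigned, ← hsigned, MulAut.mul_apply, hs, map_mul]
  abel

theorem exists_mul_isNielsenMinimal [Fintype ι] (α : MulAut (FreeGroup ι)) :
    ∃ e ∈ transvectionSubgroup ι, IsNielsenMinimal (α * e).toMonoidHom := by
  let total (β : MulAut (FreeGroup ι)) : ℕ ×ₗ ℕ := ∑ i, complexity (β (of i))
  obtain ⟨e, he, hmin⟩ := (InvImage.wf (fun e => total (α * e)) wellFounded_lt).has_min
    (transvectionSubgroup ι : Set (MulAut (FreeGroup ι))) ⟨1, one_mem _⟩
  refine ⟨e, he, fun s t hst => ?_⟩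
  obtain ⟨τ, hτ, hs, hfix⟩ := exists_mem_transvectionSubgroup_apply_signed hst
  have hle : total (α * e) ≤ total (α * e * τ) := by
    simpa [InvImage, mul_assoc] using hmin (e * τ) (mul_mem he hτ)
  have hsum := sum_apply_mul_add complexity complexity_inv (α * e) τ hs hfix
  exact le_of_add_le_add_left ((add_le_add_left hle _).trans hsum.le)

theorem exists_mul_norm_le_one [Finite ι] (α : MulAut (FreeGroup ι)) :
    ∃ e ∈ transvectionSubgroup ι, ∀ i, ((α * e) (of i)).norm ≤ 1 := by
  have := Fintype.ofFinite ι
  obtain ⟨e, he, hmin⟩ := exists_mul_isNielsenMinimal α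
  refine ⟨e, he, norm_le_one_of_isNielsenReduced (hmin.isNielsenReduced fun s => ?_)⟩
  exact (map_ne_one_iff _ (α * e).injective).2 (signed_ne_one s)

end TransvectionSubgroup

section NielsenFiniteness

theorem fg_of_fg_of_finiteIndex {G : Type*} [Group G] {H : Subgroup G} (hfg : H.FG)
    (hfin : H.FiniteIndex) : Group.FG G := by
  have : Finite (G ⧸ H) := Subgroup.finite_quotient_of_finiteIndex
  have hreps : (Subgroup.closure (Set.range (Quotient.out : G ⧸ H → G))).FG :=
    (Subgroup.fg_iff _).2 ⟨_, rfl, Set.finite_range _⟩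
  refine Group.fg_def.2 ?_
  convert hfg.sup hreps
  refine (eq_top_iff.2 fun g _ => ?_).symm
  obtain ⟨h, hh⟩ := QuotientGroup.mk_out_eq_mul H g
  rw [← mul_inv_eq_iff_eq_mul.2 hh]
  exact mul_mem (Subgroup.mem_sup_right (Subgroup.subset_closure ⟨_, rfl⟩))
    (Subgroup.mem_sup_left (inv_mem h.2))

variable (ι : Type*) [DecidableEq ι] [Finite ι]

theorem finite_setOf_norm_le_one :
    {α : MulAut (FreeGroup ι) | ∀ i, (α (of i)).norm ≤ 1}.Finite := by
  have hwords : {x : FreeGroup ι | x.norm ≤ 1}.Finite :=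
    .of_injOn (f := FreeGroup.toWord) (fun _ hx => hx) FreeGroup.toWord_injective.injOn
      (List.finite_length_le (ι × Bool) 1)
  refine Set.Finite.of_injOn (f := fun α i => α (of i)) ?_ (fun α _ β _ h => aut_ext (congrFun h))
    (Set.Finite.pi fun _ : ι => hwords)
  exact fun α hα i _ => hα i

theorem finiteIndex_transvectionSubgroup : (transvectionSubgroup ι).FiniteIndex := by
  have := (finite_setOf_norm_le_one ι).to_subtype
  have hsurj : Function.Surjective
      fun α : {α : MulAut (FreeGroup ι) | ∀ i, (α (of i)).norm ≤ 1} =>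
        (α.1 : MulAut (FreeGroup ι) ⧸ transvectionSubgroup ι) := by
    intro q
    obtain ⟨α, rfl⟩ := QuotientGroup.mk_surjective q
    obtain ⟨e, he, hnorm⟩ := exists_mul_norm_le_one α
    exact ⟨⟨α * e, hnorm⟩, (QuotientGroup.eq.2 (by simpa using he)).symm⟩
  have := Finite.of_surjective _ hsurj
  exact Subgroup.finiteIndex_of_finite_quotient

omit [DecidableEq ι] in
theorem fg_mulAut_freeGroup : Group.FG (MulAut (FreeGroup ι)) := by
  classical
  exact fg_of_fg_of_finiteIndex ((Subgroup.fg_iff _).2 ⟨_, rfl, finite_transvections⟩)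
      (finiteIndex_transvectionSubgroup ι)

end NielsenFiniteness

/-! ### Finiteness of Steinberg groups with torsion generators -/

section FiniteProducts

open Pointwise commutatorElement

variable {P : Type*} [Group P]

theorem finite_closure_of_commute {s : Set P} (hs : s.Finite)
    (hcomm : ∀ x ∈ s, ∀ y ∈ s, x * y = y * x) (htors : ∀ x ∈ s, IsOfFinOrder x) :
    Finite (Subgroup.closure s) := by
  have := Subgroup.isMulCommutative_closure hcomm
  let _ : CommGroup (Subgroup.closure s) :=
    { (inferInstance : Group (Subgroup.closure s)) with mul_comm := mul_comm' }
  have hfg : Group.FG (Subgroup.closure s) :=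
    (Group.fg_iff_subgroup_fg _).2 ((Subgroup.fg_iff _).2 ⟨s, rfl, hs⟩)
  have htorsion : (⊤ : Subgroup (Subgroup.closure s)) ≤ CommGroup.torsion _ := by
    rw [← Subgroup.closure_closure_coe_preimage, Subgroup.closure_le]
    exact fun x hx => Submonoid.isOfFinOrder_coe.1 (htors x hx)
  exact CommGroup.finite_of_fg_isMulTorsion _ fun x => htorsion (Subgroup.mem_top x)

theorem closure_le_normalizer_closure {s t : Set P}
    (h : ∀ x ∈ s, ∀ y ∈ t, x * y * x⁻¹ ∈ Subgroup.closure t ∧ x⁻¹ * y * x ∈ Subgroup.closure t) :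
    Subgroup.closure s ≤ Subgroup.normalizer (Subgroup.closure t : Set P) := by
  have hconj (x : P) (hx : ∀ y ∈ t, x * y * x⁻¹ ∈ Subgroup.closure t) :
      ∀ y ∈ Subgroup.closure t, x * y * x⁻¹ ∈ Subgroup.closure t :=
    (Subgroup.closure_le ((Subgroup.closure t).comap (MulAut.conj x).toMonoidHom)).2 hx
  rw [Subgroup.closure_le]
  refine fun x hx => Subgroup.mem_normalizer_iff.2 fun y =>
    ⟨hconj x (fun z hz => (h x hx z hz).1) y, fun hy => ?_⟩
  simpa [mul_assoc] using hconj x⁻¹ (fun z hz => by simpa using (h x hx z hz).2) _ hy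

theorem exists_forall_pow_eq_sup (A B : Subgroup P) [Finite ↥(A ⊔ B)] :
    ∃ K, ∀ k, K ≤ k → ((A : Set P) * B) ^ k = (A ⊔ B : Subgroup P) := by
  have hone : (1 : P) ∈ (A : Set P) * B := ⟨1, one_mem A, 1, one_mem B, one_mul 1⟩
  have hmem : ∀ x : ↥(A ⊔ B), ∃ k, (x : P) ∈ ((A : Set P) * B) ^ k := by
    rintro ⟨x, hx⟩
    change ∃ k, x ∈ ((A : Set P) * B) ^ k
    rw [Subgroup.sup_eq_closure, ← Subgroup.mem_toSubmonoid, Subgroup.closure_toSubmonoid] at hx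
    simp only [Set.union_inv, inv_coe_set, Set.union_self] at hx
    induction hx using Submonoid.closure_induction_right with
    | one => exact ⟨0, by simp⟩
    | mul_right x _ y hy ih =>
      obtain ⟨k, hk⟩ := ih
      refine ⟨k + 1, pow_succ ((A : Set P) * B) k ▸ Set.mul_mem_mul hk ?_⟩
      obtain hy | hy := hy
      · exact ⟨y, hy, 1, one_mem B, mul_one y⟩
      · exact ⟨1, one_mem A, y, hy, one_mul y⟩
  choose len hlen using hmem
  have := Fintype.ofFinite ↥(A ⊔ B)
  refine ⟨Finset.univ.sup len + 1, fun k hk => Set.Subset.antisymm ?_ fun x hx => ?_⟩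
  · rw [← coe_set_pow (by omega : k ≠ 0) (A ⊔ B)]
    exact Set.pow_subset_pow_left (Set.mul_subset_iff.2 fun a ha b hb =>
      mul_mem (Subgroup.mem_sup_left ha) (Subgroup.mem_sup_right hb))
  · have hle : len ⟨x, hx⟩ ≤ Finset.univ.sup len := Finset.le_sup (Finset.mem_univ _)
    exact Set.pow_subset_pow_right hone (by omega) (hlen ⟨x, hx⟩)

theorem commute_coe_of_le_normalizer {X Y : Subgroup P}
    (h : X ≤ Subgroup.normalizer (Y : Set P)) : Commute (X : Set P) (Y : Set P) :=
  Subgroup.set_mul_normalizer_comm (X : Set P) Y h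

theorem finite_pow {s : Set P} (hs : s.Finite) (k : ℕ) : (s ^ k).Finite := by
  classical
  rw [← hs.coe_toFinset, ← Finset.coe_pow]
  exact Finset.finite_toSet _

theorem finite_sup_of_le_normalizer {X Y : Subgroup P} [Finite X] [Finite Y]
    (h : X ≤ Subgroup.normalizer (Y : Set P)) : Finite ↥(X ⊔ Y) := by
  change ((X ⊔ Y : Subgroup P) : Set P).Finite
  rw [Subgroup.coe_mul_of_left_le_normalizer_right X Y h]
  exact (Set.toFinite (X : Set P)).mul (Set.toFinite (Y : Set P))

/- Moving the factors past one another turns the set into `(A A')ᵏ (V W)ᵏ`. -/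
theorem exists_forall_sup_le_stabilizer_pow {A A' V W : Subgroup P} [Finite ↥(A ⊔ A')]
    (hAV : A ≤ Subgroup.normalizer (V : Set P)) (hAV' : A' ≤ Subgroup.normalizer (V : Set P))
    (hAW : A ≤ Subgroup.normalizer (W : Set P)) (hAW' : A' ≤ Subgroup.normalizer (W : Set P)) :
    ∃ K, ∀ k, K ≤ k → A ⊔ A' ≤ MulAction.stabilizer P
      ((((A ⊔ V : Subgroup P) : Set P) * ((A' ⊔ W : Subgroup P) : Set P)) ^ k) := by
  have hcomm : Commute ((A : Set P) * A') ((V : Set P) * W) :=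
    ((commute_coe_of_le_normalizer hAV).mul_left (commute_coe_of_le_normalizer hAV')).mul_right
      ((commute_coe_of_le_normalizer hAW).mul_left (commute_coe_of_le_normalizer hAW'))
  have hprod : ((A ⊔ V : Subgroup P) : Set P) * ((A' ⊔ W : Subgroup P) : Set P) =
      ((A : Set P) * A') * ((V : Set P) * W) := by
    rw [Subgroup.coe_mul_of_left_le_normalizer_right A V hAV,
      Subgroup.coe_mul_of_left_le_normalizer_right A' W hAW']
    exact (commute_coe_of_le_normalizer hAV').symm.mul_mul_mul_comm _ _
  obtain ⟨K, hK⟩ := exists_forall_pow_eq_sup A A'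
  refine ⟨K, fun k hk h hh => ?_⟩
  rw [hprod, hcomm.mul_pow, hK k hk, MulAction.mem_stabilizer_iff, ← smul_mul_assoc,
    smul_coe_set hh]

theorem finite_commutatorSet_of_finiteIndex_center (h : (Subgroup.center P).FiniteIndex) :
    Finite (commutatorSet P) := by
  have hcentral : ∀ c ∈ Subgroup.center P, ∀ u v : P, ⁅u * c, v⁆ = ⁅u, v⁆ := by
    intro c hc u v
    have hcv : c * v = v * c := (Subgroup.mem_center_iff.1 hc v).symm
    simp only [commutatorElement_def, mul_inv_rev, mul_assoc, mul_left_cancel_iff]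
    rw [← mul_assoc c, hcv, mul_assoc, mul_inv_cancel_left]
  have hcentral' : ∀ c ∈ Subgroup.center P, ∀ u v : P, ⁅u, v * c⁆ = ⁅u, v⁆ := fun c hc u v => by
    rw [← inv_inj, commutatorElement_inv, commutatorElement_inv, hcentral c hc]
  have := Subgroup.finite_quotient_of_finiteIndex (H := Subgroup.center P)
  refine (Set.finite_range fun q : (P ⧸ Subgroup.center P) × (P ⧸ Subgroup.center P) =>
    ⁅q.1.out, q.2.out⁆).subset ?_ |>.to_subtype
  rintro _ ⟨u, v, rfl⟩
  obtain ⟨c, hc⟩ := QuotientGroup.mk_out_eq_mul (Subgroup.center P) u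
  obtain ⟨d, hd⟩ := QuotientGroup.mk_out_eq_mul (Subgroup.center P) v
  exact ⟨(u, v), by simp only [hc, hd, hcentral c c.2, hcentral' d d.2]⟩

theorem relIndex_centralizer_ne_zero {H V : Subgroup P} [Finite V]
    (h : H ≤ Subgroup.normalizer (V : Set P)) :
    (Subgroup.centralizer (V : Set P)).relIndex H ≠ 0 := by
  have : Finite (MulAut V) := Finite.of_injective _ DFunLike.coe_injective
  refine mt (Subgroup.relIndex_eq_zero_of_le_right h) ?_
  rw [Subgroup.relIndex, ← Subgroup.normalizerMonoidHom_ker, Subgroup.index_ker]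
  exact Nat.card_pos.ne'

end FiniteProducts

section Steinberg

open Pointwise commutatorElement

variable {ι P : Type*} [Group P] {e : ι → ι → P}

/-- The Steinberg relations for a family indexed by pairs of distinct indices; the diagonal values
of the family are irrelevant. -/
structure IsSteinberg (e : ι → ι → P) : Prop where
  commute : ∀ i j k l, i ≠ j → k ≠ l → j ≠ k → i ≠ l → Commute (e i j) (e k l)
  conj : ∀ i j k, i ≠ j → j ≠ k → i ≠ k → e j k * e i j * (e j k)⁻¹ = e i j * e i k

/-- The subgroup generated by the off-diagonal members of a family whose index satisfies `r`. -/
def rootSubgroup (e : ι → ι → P) (r : ι → ι → Prop) : Subgroup P :=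
  Subgroup.closure {g | ∃ i j, i ≠ j ∧ r i j ∧ e i j = g}

/-- The subgroup generated by the `l`-th column. -/
abbrev columnSubgroup (e : ι → ι → P) (l : ι) : Subgroup P := rootSubgroup e fun _ j => j = l

/-- The subgroup generated by the `l`-th row. -/
abbrev rowSubgroup (e : ι → ι → P) (l : ι) : Subgroup P := rootSubgroup e fun i _ => i = l

/-- The subgroup generated by the entries outside the `l`-th row and column. -/
abbrev leviSubgroup (e : ι → ι → P) (l : ι) : Subgroup P :=
  rootSubgroup e fun i j => i ≠ l ∧ j ≠ l

/-- The subgroup generated by the entries above the diagonal. -/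
abbrev upperSubgroup [LT ι] (e : ι → ι → P) : Subgroup P := rootSubgroup e fun i j => i < j

/-- The subgroup generated by the entries below the diagonal. -/
abbrev lowerSubgroup [LT ι] (e : ι → ι → P) : Subgroup P := rootSubgroup e fun i j => j < i

theorem mem_rootSubgroup {r : ι → ι → Prop} {i j : ι} (h : i ≠ j) (hr : r i j) :
    e i j ∈ rootSubgroup e r :=
  Subgroup.subset_closure ⟨i, j, h, hr, rfl⟩

theorem rootSubgroup_le {r : ι → ι → Prop} {H : Subgroup P}
    (h : ∀ i j, i ≠ j → r i j → e i j ∈ H) : rootSubgroup e r ≤ H := by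
  rw [rootSubgroup, Subgroup.closure_le]
  rintro _ ⟨i, j, hij, hr, rfl⟩
  exact h i j hij hr

theorem rootSubgroup_mono {r s : ι → ι → Prop} (h : ∀ i j, i ≠ j → r i j → s i j) :
    rootSubgroup e r ≤ rootSubgroup e s :=
  rootSubgroup_le fun i j hij hr => mem_rootSubgroup hij (h i j hij hr)

theorem rootSubgroup_sup_rootSubgroup {r s t : ι → ι → Prop}
    (h : ∀ i j, i ≠ j → (r i j ∨ s i j ↔ t i j)) :
    rootSubgroup e r ⊔ rootSubgroup e s = rootSubgroup e t := by
  refine le_antisymm (sup_le (rootSubgroup_mono fun i j hij hr => (h i j hij).1 (.inl hr))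
    (rootSubgroup_mono fun i j hij hs => (h i j hij).1 (.inr hs))) (rootSubgroup_le ?_)
  intro i j hij ht
  obtain hr | hs := (h i j hij).2 ht
  · exact Subgroup.mem_sup_left (mem_rootSubgroup hij hr)
  · exact Subgroup.mem_sup_right (mem_rootSubgroup hij hs)

theorem map_rootSubgroup {Q : Type*} [Group Q] (f : P →* Q) (r : ι → ι → Prop) :
    (rootSubgroup e r).map f = rootSubgroup (fun i j => f (e i j)) r :=
  le_antisymm (Subgroup.map_le_iff_le_comap.2 (rootSubgroup_le fun _ _ hij hr =>
      mem_rootSubgroup (e := fun i j => f (e i j)) hij hr))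
    (rootSubgroup_le fun _ _ hij hr => Subgroup.mem_map_of_mem f (mem_rootSubgroup hij hr))

theorem rootSubgroup_inv_swap (r : ι → ι → Prop) :
    rootSubgroup (fun i j => (e j i)⁻¹) r = rootSubgroup e fun i j => r j i :=
  le_antisymm (rootSubgroup_le fun _ _ hij hr => inv_mem (mem_rootSubgroup hij.symm hr))
    (rootSubgroup_le fun _ _ hij hr => inv_mem_iff.1
      (mem_rootSubgroup (e := fun i j => (e j i)⁻¹) hij.symm hr))

theorem leviSubgroup_inv_swap (l : ι) :
    leviSubgroup (fun i j => (e j i)⁻¹) l = leviSubgroup e l := by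
  simp only [leviSubgroup, rootSubgroup_inv_swap, and_comm]

theorem finite_rootSubgroup_of_commute [Finite ι] {r : ι → ι → Prop}
    (htors : ∀ i j, i ≠ j → IsOfFinOrder (e i j))
    (hcomm : ∀ i j k l, r i j → r k l → i ≠ j → k ≠ l → Commute (e i j) (e k l)) :
    Finite (rootSubgroup e r) := by
  refine finite_closure_of_commute
    ((Set.finite_range fun p : ι × ι => e p.1 p.2).subset ?_) ?_ ?_
  · rintro _ ⟨i, j, -, -, rfl⟩
    exact ⟨(i, j), rfl⟩
  · rintro _ ⟨i, j, hij, hr, rfl⟩ _ ⟨k, l, hkl, hs, rfl⟩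
    exact hcomm i j k l hr hs hij hkl
  · rintro _ ⟨i, j, hij, -, rfl⟩
    exact htors i j hij

theorem exists_ne_ne_of_three_le_card [Finite ι] (h3 : 3 ≤ Nat.card ι) (i k : ι) :
    ∃ j, j ≠ i ∧ j ≠ k := by
  classical
  have := Fintype.ofFinite ι
  obtain ⟨j, hj⟩ := Finset.exists_mem_notMem_of_card_lt_card (s := {i, k}) (t := Finset.univ)
    (Finset.card_le_two.trans_lt (by rwa [Finset.card_univ, ← Nat.card_eq_fintype_card]))
  exact ⟨j, by simpa [not_or] using hj⟩

section Order

variable [LinearOrder ι] [BoundedOrder ι]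

theorem upperSubgroup_eq_sup_columnSubgroup :
    upperSubgroup e =
      rootSubgroup e (fun i j => i < j ∧ i ≠ ⊤ ∧ j ≠ ⊤) ⊔ columnSubgroup e ⊤ := by
  refine (rootSubgroup_sup_rootSubgroup fun i j hij => ⟨?_, fun hlt => ?_⟩).symm
  · rintro (⟨hlt, -⟩ | rfl)
    exacts [hlt, hij.lt_top]
  · by_cases hj : j = ⊤
    exacts [.inr hj, .inl ⟨hlt, hlt.ne_top, hj⟩]

theorem lowerSubgroup_eq_sup_rowSubgroup :
    lowerSubgroup e =
      rootSubgroup e (fun i j => j < i ∧ i ≠ ⊤ ∧ j ≠ ⊤) ⊔ rowSubgroup e ⊤ := by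
  refine (rootSubgroup_sup_rootSubgroup fun i j hij => ⟨?_, fun hlt => ?_⟩).symm
  · rintro (⟨hlt, -⟩ | rfl)
    exacts [hlt, hij.symm.lt_top]
  · by_cases hi : i = ⊤
    exacts [.inr hi, .inl ⟨hlt, hi, hlt.ne_top⟩]

theorem leviSubgroup_top_eq_sup :
    leviSubgroup e ⊤ = rootSubgroup e (fun i j => i < j ∧ i ≠ ⊤ ∧ j ≠ ⊤) ⊔
      rootSubgroup e (fun i j => j < i ∧ i ≠ ⊤ ∧ j ≠ ⊤) := by
  refine (rootSubgroup_sup_rootSubgroup fun i j hij => ?_).symm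
  rw [← or_and_right, and_iff_right hij.lt_or_gt]

end Order

namespace IsSteinberg

variable (h : IsSteinberg e)

include h

theorem map {Q : Type*} [Group Q] (f : P →* Q) : IsSteinberg fun i j => f (e i j) where
  commute i j k l hij hkl hjk hil := (h.commute i j k l hij hkl hjk hil).map f
  conj i j k hij hjk hik := by
    rw [← map_mul, ← map_inv, ← map_mul, h.conj i j k hij hjk hik, map_mul]

theorem inv_mul_mul {i j k : ι} (hij : i ≠ j) (hjk : j ≠ k) (hik : i ≠ k) :
    (e i j)⁻¹ * e j k * e i j = e i k * e j k := by
  rw [mul_assoc, inv_mul_eq_iff_eq_mul, ← mul_assoc, ← h.conj i j k hij hjk hik]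
  simp

/- The analogue of the inverse transpose, which exchanges rows and columns. -/
theorem inv_swap : IsSteinberg fun i j => (e j i)⁻¹ where
  commute i j k l hij hkl hjk hil :=
    (h.commute j i l k hij.symm hkl.symm hil hjk).inv_inv
  conj i j k hij hjk hik := by
    simpa [mul_assoc] using congrArg (·⁻¹) (h.inv_mul_mul hjk.symm hij.symm hik.symm)

theorem mul_mul_inv {i j k : ι} (hij : i ≠ j) (hjk : j ≠ k) (hik : i ≠ k) :
    e i j * e j k * (e i j)⁻¹ = (e i k)⁻¹ * e j k := by
  have hcomm := h.commute i j i k hij hik hij.symm hik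
  rw [mul_inv_eq_iff_eq_mul, mul_assoc, eq_inv_mul_iff_mul_eq, ← mul_assoc, ← hcomm.eq,
    ← h.conj i j k hij hjk hik]
  simp

theorem commutatorElement_inv_left {i j k : ι} (hij : i ≠ j) (hjk : j ≠ k) (hik : i ≠ k) :
    ⁅(e i j)⁻¹, e j k⁆ = e i k := by
  rw [commutatorElement_def, inv_inv, h.inv_mul_mul hij hjk hik, mul_inv_cancel_right]

theorem pow_mul_mul_inv {i j k : ι} (hij : i ≠ j) (hjk : j ≠ k) (hik : i ≠ k) (m : ℕ) :
    e j k ^ m * e i j * (e j k ^ m)⁻¹ = e i j * e i k ^ m := by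
  have hpow : (e i j)⁻¹ * e j k ^ m * e i j = e i k ^ m * e j k ^ m := by
    rw [← (h.commute i k j k hik hjk hjk.symm hik).mul_pow, ← h.inv_mul_mul hij hjk hik]
    simpa using (conj_pow (a := (e i j)⁻¹) (b := e j k) (i := m)).symm
  rw [mul_inv_eq_iff_eq_mul, mul_assoc (e i j), ← hpow]
  simp only [mul_assoc, mul_inv_cancel_left]

theorem isOfFinOrder_of_commute_pow {i j k : ι} (hij : i ≠ j) (hjk : j ≠ k) (hik : i ≠ k) {p : ℕ}
    (hp : p ≠ 0) (hcomm : Commute (e j k ^ p) (e i j ^ p)) : IsOfFinOrder (e i k) := by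
  have hpow : e j k ^ p * e i j ^ p * (e j k ^ p)⁻¹ = e i j ^ p * e i k ^ (p * p) := by
    rw [← conj_pow, h.pow_mul_mul_inv hij hjk hik,
      ((h.commute i j i k hij hik hij.symm hik).pow_right p).mul_pow, pow_mul]
  rw [hcomm.eq, mul_inv_cancel_right, left_eq_mul] at hpow
  exact isOfFinOrder_iff_pow_eq_one.2 ⟨p * p, Nat.mul_pos hp.pos hp.pos, hpow⟩

theorem mem_of_mem_of_mem {H : Subgroup P} {i j k : ι} (hij : i ≠ j) (hjk : j ≠ k)
    (hik : i ≠ k) (hleft : e i j ∈ H) (hright : e j k ∈ H) : e i k ∈ H := by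
  rw [← h.commutatorElement_inv_left hij hjk hik, commutatorElement_def]
  exact mul_mem (mul_mem (mul_mem (inv_mem hleft) hright) (inv_mem (inv_mem hleft)))
    (inv_mem hright)

theorem le_normalizer_columnSubgroup {l : ι} {r : ι → ι → Prop}
    (hr : ∀ i j, r i j → i ≠ l ∧ j ≠ l) :
    rootSubgroup e r ≤ Subgroup.normalizer (columnSubgroup e l : Set P) := by
  apply closure_le_normalizer_closure
  rintro _ ⟨i, j, hij, hrij, rfl⟩ _ ⟨k, l, hkl, rfl, rfl⟩
  change _ ∈ columnSubgroup e l ∧ _ ∈ columnSubgroup e l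
  obtain ⟨hil, -⟩ := hr i j hrij
  have hmem : ∀ m, m ≠ l → e m l ∈ columnSubgroup e l := fun m hml => mem_rootSubgroup hml rfl
  obtain rfl | hjk := eq_or_ne j k
  · rw [h.mul_mul_inv hij hkl hil, h.inv_mul_mul hij hkl hil]
    exact ⟨mul_mem (inv_mem (hmem i hil)) (hmem j hkl), mul_mem (hmem i hil) (hmem j hkl)⟩
  · have hcomm := h.commute i j k l hij hkl hjk hil
    rw [hcomm.mul_inv_cancel, hcomm.inv_mul_cancel]
    exact ⟨hmem k hkl, hmem k hkl⟩

theorem le_normalizer_rowSubgroup {l : ι} {r : ι → ι → Prop}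
    (hr : ∀ i j, r i j → i ≠ l ∧ j ≠ l) :
    rootSubgroup e r ≤ Subgroup.normalizer (rowSubgroup e l : Set P) := by
  simpa only [rootSubgroup_inv_swap] using
    h.inv_swap.le_normalizer_columnSubgroup (r := fun i j => r j i) fun i j hij => (hr j i hij).symm

theorem columnSubgroup_sup_rowSubgroup (hgen : rootSubgroup e (fun _ _ => True) = ⊤) (l : ι) :
    columnSubgroup e l ⊔ rowSubgroup e l = ⊤ := by
  rw [eq_top_iff, ← hgen]
  refine rootSubgroup_le fun i j hij _ => ?_
  obtain rfl | hj := eq_or_ne j l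
  · exact Subgroup.mem_sup_left (mem_rootSubgroup hij rfl)
  obtain rfl | hi := eq_or_ne i l
  · exact Subgroup.mem_sup_right (mem_rootSubgroup hij rfl)
  exact h.mem_of_mem_of_mem hi hj.symm hij
    (Subgroup.mem_sup_left (mem_rootSubgroup hi rfl))
    (Subgroup.mem_sup_right (mem_rootSubgroup hj.symm rfl))

theorem leviSubgroup_sup_leviSubgroup (hgen : rootSubgroup e (fun _ _ => True) = ⊤) {a b c : ι}
    (hab : a ≠ b) (hbc : b ≠ c) (hac : a ≠ c) : leviSubgroup e c ⊔ leviSubgroup e a = ⊤ := by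
  have hmem_c : ∀ {i j}, i ≠ j → i ≠ c → j ≠ c → e i j ∈ leviSubgroup e c ⊔ leviSubgroup e a :=
    fun hij hi hj => Subgroup.mem_sup_left (mem_rootSubgroup hij ⟨hi, hj⟩)
  have hmem_a : ∀ {i j}, i ≠ j → i ≠ a → j ≠ a → e i j ∈ leviSubgroup e c ⊔ leviSubgroup e a :=
    fun hij hi hj => Subgroup.mem_sup_right (mem_rootSubgroup hij ⟨hi, hj⟩)
  rw [eq_top_iff, ← hgen]
  refine rootSubgroup_le fun i j hij _ => ?_
  by_cases hc : i ≠ c ∧ j ≠ c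
  · exact hmem_c hij hc.1 hc.2
  by_cases ha : i ≠ a ∧ j ≠ a
  · exact hmem_a hij ha.1 ha.2
  obtain ⟨rfl, rfl⟩ | ⟨rfl, rfl⟩ : i = a ∧ j = c ∨ i = c ∧ j = a := by grind
  · exact h.mem_of_mem_of_mem hab hbc hij (hmem_c hab hac hbc) (hmem_a hbc hab.symm hac.symm)
  · exact h.mem_of_mem_of_mem hbc.symm hab.symm hij (hmem_a hbc.symm hij hab.symm)
      (hmem_c hab.symm hbc hac)

theorem commutator_eq_top [Finite ι] (h3 : 3 ≤ Nat.card ι)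
    (hgen : rootSubgroup e (fun _ _ => True) = ⊤) : commutator P = ⊤ := by
  rw [eq_top_iff, ← hgen]
  refine rootSubgroup_le fun i k hik _ => ?_
  obtain ⟨j, hji, hjk⟩ := exists_ne_ne_of_three_le_card h3 i k
  rw [← h.commutatorElement_inv_left hji.symm hjk hik]
  exact Subgroup.commutator_mem_commutator (Subgroup.mem_top _) (Subgroup.mem_top _)

theorem exists_forall_leviSubgroup_top_le_stabilizer [LinearOrder ι] [BoundedOrder ι]
    [Finite (leviSubgroup e ⊤)] :
    ∃ K, ∀ k, K ≤ k → leviSubgroup e ⊤ ≤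
      MulAction.stabilizer P (((upperSubgroup e : Set P) * lowerSubgroup e) ^ k) := by
  have : Finite ↥(rootSubgroup e (fun i j => i < j ∧ i ≠ ⊤ ∧ j ≠ ⊤) ⊔
      rootSubgroup e (fun i j => j < i ∧ i ≠ ⊤ ∧ j ≠ ⊤)) := by
    rwa [← leviSubgroup_top_eq_sup]
  rw [leviSubgroup_top_eq_sup, upperSubgroup_eq_sup_columnSubgroup,
    lowerSubgroup_eq_sup_rowSubgroup]
  exact exists_forall_sup_le_stabilizer_pow
    (h.le_normalizer_columnSubgroup fun _ _ => And.right)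
    (h.le_normalizer_columnSubgroup fun _ _ => And.right)
    (h.le_normalizer_rowSubgroup fun _ _ => And.right)
    (h.le_normalizer_rowSubgroup fun _ _ => And.right)

/- The previous statement for the inverse transpose and the reversed order. -/
theorem exists_forall_leviSubgroup_bot_le_stabilizer [LinearOrder ι] [BoundedOrder ι]
    [Finite (leviSubgroup e ⊥)] :
    ∃ K, ∀ k, K ≤ k → leviSubgroup e ⊥ ≤
      MulAction.stabilizer P (((upperSubgroup e : Set P) * lowerSubgroup e) ^ k) := by
  have hlevi : leviSubgroup (ι := ιᵒᵈ) (fun i j => (e j i)⁻¹) ⊤ = leviSubgroup e ⊥ :=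
    leviSubgroup_inv_swap (ι := ιᵒᵈ) ⊤
  have hupper : upperSubgroup (ι := ιᵒᵈ) (fun i j => (e j i)⁻¹) = upperSubgroup e :=
    rootSubgroup_inv_swap (ι := ιᵒᵈ) _
  have hlower : lowerSubgroup (ι := ιᵒᵈ) (fun i j => (e j i)⁻¹) = lowerSubgroup e :=
    rootSubgroup_inv_swap (ι := ιᵒᵈ) _
  have : Finite (leviSubgroup (ι := ιᵒᵈ) (fun i j => (e j i)⁻¹) ⊤) := by rwa [hlevi]
  have hdual : IsSteinberg (ι := ιᵒᵈ) fun i j => (e j i)⁻¹ := h.inv_swap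
  simpa only [hlevi, hupper, hlower] using hdual.exists_forall_leviSubgroup_top_le_stabilizer

variable (htors : ∀ i j, i ≠ j → IsOfFinOrder (e i j))

include htors

theorem finite_columnSubgroup [Finite ι] (l : ι) : Finite (columnSubgroup e l) := by
  refine finite_rootSubgroup_of_commute htors ?_
  rintro i j k l rfl rfl hij hkl
  exact h.commute i _ k _ hij hkl hkl.symm hij

theorem finite_rowSubgroup [Finite ι] (l : ι) : Finite (rowSubgroup e l) := by
  refine finite_rootSubgroup_of_commute htors ?_
  rintro i j k l rfl rfl hij hkl
  exact h.commute _ j _ l hij hkl hij.symm hkl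

theorem relIndex_center_leviSubgroup_ne_zero [Finite ι]
    (hgen : rootSubgroup e (fun _ _ => True) = ⊤) (l : ι) :
    (Subgroup.center P).relIndex (leviSubgroup e l) ≠ 0 := by
  have := h.finite_columnSubgroup htors l
  have := h.finite_rowSubgroup htors l
  have hcol := relIndex_centralizer_ne_zero
    (h.le_normalizer_columnSubgroup (l := l) (r := fun i j => i ≠ l ∧ j ≠ l) fun _ _ => id)
  have hrow := relIndex_centralizer_ne_zero
    (h.le_normalizer_rowSubgroup (l := l) (r := fun i j => i ≠ l ∧ j ≠ l) fun _ _ => id)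
  refine mt (Subgroup.relIndex_eq_zero_of_le_left ?_) (Subgroup.relIndex_inf_ne_zero hcol hrow)
  rintro x ⟨hxcol, hxrow⟩
  have htop : columnSubgroup e l ⊔ rowSubgroup e l ≤ Subgroup.centralizer {x} :=
    sup_le
      (fun y hy => Subgroup.mem_centralizer_singleton_iff.2
        (Subgroup.mem_centralizer_iff.1 hxcol y hy))
      (fun y hy => Subgroup.mem_centralizer_singleton_iff.2
        (Subgroup.mem_centralizer_iff.1 hxrow y hy))
  rw [h.columnSubgroup_sup_rowSubgroup hgen] at htop
  exact Subgroup.mem_center_iff.2 fun g =>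
    Subgroup.mem_centralizer_singleton_iff.1 (htop (Subgroup.mem_top g))

theorem finite_upperSubgroup [Finite ι] [LinearOrder ι] [BoundedOrder ι]
    [Finite (leviSubgroup e ⊤)] : Finite (upperSubgroup e) := by
  have := h.finite_columnSubgroup htors ⊤
  have : Finite (rootSubgroup e fun i j => i < j ∧ i ≠ ⊤ ∧ j ≠ ⊤) :=
    Finite.of_injective _ (Subgroup.inclusion_injective
      (rootSubgroup_mono (e := e) fun _ _ _ => And.right : _ ≤ leviSubgroup e ⊤))
  rw [upperSubgroup_eq_sup_columnSubgroup]
  exact finite_sup_of_le_normalizer (h.le_normalizer_columnSubgroup fun _ _ => And.right)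

theorem finite_lowerSubgroup [Finite ι] [LinearOrder ι] [BoundedOrder ι]
    [Finite (leviSubgroup e ⊤)] : Finite (lowerSubgroup e) := by
  have : Finite (leviSubgroup (fun i j => (e j i)⁻¹) ⊤) := by rwa [leviSubgroup_inv_swap]
  rw [lowerSubgroup, ← rootSubgroup_inv_swap fun i j => i < j]
  exact h.inv_swap.finite_upperSubgroup fun i j hij => (htors j i hij.symm).inv

theorem finite_of_finite_leviSubgroup [Finite ι] [LinearOrder ι] [BoundedOrder ι]
    [Finite (leviSubgroup e ⊤)] [Finite (leviSubgroup e ⊥)]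
    (hgen : rootSubgroup e (fun _ _ => True) = ⊤) {m : ι} (hbot : ⊥ < m) (htop : m < ⊤) :
    Finite P := by
  have hupper := h.finite_upperSubgroup htors
  have hlower := h.finite_lowerSubgroup htors
  obtain ⟨K, hK⟩ := h.exists_forall_leviSubgroup_top_le_stabilizer
  obtain ⟨L, hL⟩ := h.exists_forall_leviSubgroup_bot_le_stabilizer
  set U : Set P := ((upperSubgroup e : Set P) * lowerSubgroup e) ^ max K L
  have hstab : MulAction.stabilizer P U = ⊤ := top_unique <|
    (h.leviSubgroup_sup_leviSubgroup hgen hbot.ne htop.ne (hbot.trans htop).ne).symm.trans_le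
      (sup_le (hK _ (le_max_left K L)) (hL _ (le_max_right K L)))
  have hne : U.Nonempty :=
    ((OneMemClass.coe_nonempty _).mul (OneMemClass.coe_nonempty _)).pow
  have hfin : U.Finite := finite_pow ((Set.toFinite _).mul (Set.toFinite _)) _
  have : Finite (⊤ : Subgroup P) := by
    rw [← hstab]
    exact MulAction.stabilizer_finite hne hfin
  exact Finite.of_equiv _ Subgroup.topEquiv.toEquiv

theorem finite_quotient_center [Finite ι] (h3 : 3 ≤ Nat.card ι)
    (hgen : rootSubgroup e (fun _ _ => True) = ⊤) : Finite (P ⧸ Subgroup.center P) := by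
  have : Nonempty ι := Finite.card_pos_iff.1 (by lia)
  let := Fintype.ofFinite ι
  let := LinearOrder.lift' (Finite.equivFin ι) (Finite.equivFin ι).injective
  let := Fintype.toBoundedOrder ι
  let q := QuotientGroup.mk' (Subgroup.center P)
  have hlevi : ∀ l, Finite (leviSubgroup (fun i j => q (e i j)) l) := fun l => by
    refine Nat.finite_of_card_ne_zero ?_
    rw [leviSubgroup, ← map_rootSubgroup, ← Subgroup.relIndex_ker, QuotientGroup.ker_mk']
    exact h.relIndex_center_leviSubgroup_ne_zero htors hgen l
  have hqgen : rootSubgroup (fun i j => q (e i j)) (fun _ _ => True) = ⊤ := by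
    rw [← map_rootSubgroup, hgen, Subgroup.map_top_of_surjective _ (QuotientGroup.mk'_surjective _)]
  have := hlevi ⊤
  have := hlevi ⊥
  obtain ⟨m, hbot, htop⟩ := exists_ne_ne_of_three_le_card h3 ⊥ ⊤
  exact (h.map q).finite_of_finite_leviSubgroup (fun i j hij => q.isOfFinOrder (htors i j hij))
    hqgen hbot.bot_lt htop.lt_top

/- Tavgen's trick gives finiteness modulo the centre, Schur's theorem turns this into finiteness of
the commutator subgroup, and the relations show that the group is perfect. -/
protected theorem finite [Finite ι] (h3 : 3 ≤ Nat.card ι)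
    (hgen : rootSubgroup e (fun _ _ => True) = ⊤) : Finite P := by
  have := h.finite_quotient_center htors h3 hgen
  have := finite_commutatorSet_of_finiteIndex_center (P := P)
    Subgroup.finiteIndex_of_finite_quotient
  have : Finite (⊤ : Subgroup P) := by
    rw [← h.commutator_eq_top h3 hgen]
    infer_instance
  exact Finite.of_equiv _ Subgroup.topEquiv.toEquiv

theorem finite_rootSubgroup [Finite ι] (h3 : 3 ≤ Nat.card ι) :
    Finite (rootSubgroup e fun _ _ => True) := by
  classical
  let E := rootSubgroup e fun _ _ => True
  let e' : ι → ι → E := fun i j =>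
    if hij : i ≠ j then ⟨e i j, mem_rootSubgroup hij trivial⟩ else 1
  have he' : ∀ i j, i ≠ j → (e' i j : P) = e i j := fun i j hij => by simp [e', hij]
  have h' : IsSteinberg e' :=
    { commute := fun i j k l hij hkl hjk hil => Subtype.ext <| by
        simpa [he', hij, hkl] using (h.commute i j k l hij hkl hjk hil).eq
      conj := fun i j k hij hjk hik => Subtype.ext <| by
        simpa [he', hij, hjk, hik] using h.conj i j k hij hjk hik }
  have hE : E ≤ (rootSubgroup e' fun _ _ => True).map E.subtype := by
    rw [map_rootSubgroup]
    refine rootSubgroup_le fun i j hij _ => ?_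
    rw [← he' i j hij]
    exact mem_rootSubgroup (e := fun i j => (e' i j : P)) hij trivial
  refine h'.finite (fun i j hij => ?_) h3 (top_unique fun x _ => ?_)
  · rw [← Submonoid.isOfFinOrder_coe, he' i j hij]
    exact htors i j hij
  · obtain ⟨y, hy, hyx⟩ := hE x.2
    rwa [← Subtype.ext hyx]

end IsSteinberg

end Steinberg

/-! ### Finite index of the commutator subgroup -/

section TorsionModCommutator

variable {G : Type*} [Group G]

theorem commute_mk_of_mem {N L : Subgroup G} [L.Normal] (hL : ⁅N, N⁆ ≤ L) {g h : G} (hg : g ∈ N)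
    (hh : h ∈ N) : Commute (QuotientGroup.mk' L g) (QuotientGroup.mk' L h) := by
  rw [← commutatorElement_eq_one_iff_commute, ← map_commutatorElement]
  exact (QuotientGroup.eq_one_iff _).2 (hL (Subgroup.commutator_mem_commutator hg hh))

/-- The elements of a normal subgroup `N` that are torsion modulo `[N, N]`. -/
def torsionModCommutator (N : Subgroup G) [N.Normal] : Subgroup G where
  carrier := {g | g ∈ N ∧ IsOfFinOrder (QuotientGroup.mk' ⁅N, N⁆ g)}
  one_mem' := ⟨one_mem N, by simp⟩
  inv_mem' := fun ⟨hg, hfin⟩ => ⟨inv_mem hg, by simpa using hfin⟩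
  mul_mem' := fun ⟨hg, hgfin⟩ ⟨hh, hhfin⟩ =>
    ⟨mul_mem hg hh, by
      rw [map_mul]
      exact (commute_mk_of_mem le_rfl hg hh).isOfFinOrder_mul hgfin hhfin⟩

instance (N : Subgroup G) [N.Normal] : (torsionModCommutator N).Normal where
  conj_mem := fun g ⟨hg, hfin⟩ a => ⟨Subgroup.Normal.conj_mem inferInstance g hg a, by
    simpa using (MulAut.conj (QuotientGroup.mk' ⁅N, N⁆ a)).toMonoidHom.isOfFinOrder hfin⟩

theorem commutator_le_torsionModCommutator (N : Subgroup G) [N.Normal] :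
    ⁅N, N⁆ ≤ torsionModCommutator N := fun x hx =>
  ⟨Subgroup.commutator_le_left N N hx, by
    rw [QuotientGroup.mk'_apply, (QuotientGroup.eq_one_iff x).2 hx]
    exact .one⟩

theorem coe_mem_commutator {N : Subgroup G} {x : N} : (x : G) ∈ ⁅N, N⁆ ↔ x ∈ commutator N := by
  rw [← Subgroup.map_subtype_commutator]
  exact Subgroup.mem_map_iff_mem N.subtype_injective

theorem finiteIndex_commutator_of_finite_abelianization {N : Subgroup G} [N.FiniteIndex]
    [Finite (Abelianization N)] : ⁅N, N⁆.FiniteIndex := by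
  have : Finite (N ⧸ commutator N) := ‹Finite (Abelianization N)›
  have : (commutator N).FiniteIndex := Subgroup.finiteIndex_of_finite_quotient
  rw [← Subgroup.map_subtype_commutator]
  constructor
  rw [Subgroup.index_map_subtype]
  exact mul_ne_zero Subgroup.FiniteIndex.index_ne_zero Subgroup.FiniteIndex.index_ne_zero

theorem finiteIndex_commutator_of_finiteIndex_torsionModCommutator [Group.FG G] {N : Subgroup G}
    [N.Normal] [(torsionModCommutator N).FiniteIndex] : ⁅N, N⁆.FiniteIndex := by
  have : N.FiniteIndex := Subgroup.finiteIndex_of_le (H := torsionModCommutator N) fun _ => And.left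
  have : Finite (Abelianization N) := by
    have : Group.FG (Abelianization N) :=
      Group.fg_of_surjective (f := Abelianization.of) QuotientGroup.mk_surjective
    refine CommGroup.finite_of_fg_isMulTorsion _ fun x => ?_
    obtain ⟨g, rfl⟩ := QuotientGroup.mk_surjective x
    obtain ⟨k, hk, -, -, hgk⟩ := Subgroup.exists_pow_mem_of_index_ne_zero
      (Subgroup.FiniteIndex.index_ne_zero (H := torsionModCommutator N)) g.1
    obtain ⟨m, hm, hgm⟩ := isOfFinOrder_iff_pow_eq_one.1 hgk
    refine isOfFinOrder_iff_pow_eq_one.2 ⟨k * m, Nat.mul_pos hk hm, ?_⟩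
    refine (QuotientGroup.eq_one_iff (g ^ (k * m))).2 (coe_mem_commutator.1 ?_)
    rwa [← map_pow, QuotientGroup.mk'_apply, QuotientGroup.eq_one_iff, ← pow_mul] at hgm
  exact finiteIndex_commutator_of_finite_abelianization

end TorsionModCommutator

section IA

/-- The automorphisms of `G` that act trivially on the abelianization. -/
def iaSubgroup (G : Type*) [Group G] : Subgroup (MulAut G) :=
  MonoidHom.ker (MonoidHom.mk' (fun α : MulAut G => α.abelianizationCongr)
    fun α β => (abelianizationCongr_trans β α).symm :
      MulAut G →* MulAut (Abelianization G))

instance (G : Type*) [Group G] : (iaSubgroup G).Normal := MonoidHom.normal_ker _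

theorem mem_iaSubgroup {G : Type*} [Group G] {α : MulAut G} :
    α ∈ iaSubgroup G ↔ ∀ x, Abelianization.of (α x) = Abelianization.of x := by
  refine MulEquiv.ext_iff.trans ⟨fun h x => h (Abelianization.of x), fun h x => ?_⟩
  obtain ⟨x, rfl⟩ := QuotientGroup.mk_surjective x
  exact h x

theorem conj_mem_iaSubgroup {G : Type*} [Group G] (g : G) : MulAut.conj g ∈ iaSubgroup G :=
  mem_iaSubgroup.2 fun x => by simp

variable {ι : Type*}

theorem mem_iaSubgroup_of_forall_of {α : MulAut (FreeGroup ι)}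
    (h : ∀ i, Abelianization.of (α (of i)) = Abelianization.of (of i)) :
    α ∈ iaSubgroup (FreeGroup ι) :=
  mem_iaSubgroup.2 <| DFunLike.congr_fun <|
    FreeGroup.ext_hom (f := Abelianization.of.comp α.toMonoidHom) (g := Abelianization.of) h

variable [DecidableEq ι]

theorem partialConj_mem_iaSubgroup (i : ι) (w : CoFree i) :
    partialConj i w ∈ iaSubgroup (FreeGroup ι) := by
  refine mem_iaSubgroup_of_forall_of fun j => ?_
  obtain rfl | h := eq_or_ne i j
  · simp [partialConj_apply, mul_comm]
  · rw [partialConj_apply, bothMul_of_ne h]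

theorem letterConj_mem_iaSubgroup {i j : ι} (h : i ≠ j) :
    letterConj h ∈ iaSubgroup (FreeGroup ι) := partialConj_mem_iaSubgroup i _

theorem rightMul_mem_iaSubgroup (i : ι) {w : CoFree i} (hw : w ∈ commutator (CoFree i)) :
    rightMul i w ∈ iaSubgroup (FreeGroup ι) := by
  refine mem_iaSubgroup_of_forall_of fun j => ?_
  obtain rfl | h := eq_or_ne i j
  · have : (Abelianization.of.comp (incl i)) w = 1 := Abelianization.commutator_subset_ker _ hw
    rw [MonoidHom.comp_apply] at this
    simp [rightMul_apply, this]
  · rw [rightMul_apply, bothMul_of_ne h]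

variable (ι) in
/-- The normal closure of the automorphisms conjugating one basis element by another. -/
def letterConjClosure : Subgroup (MulAut (FreeGroup ι)) :=
  Subgroup.normalClosure {α | ∃ (i j : ι) (h : i ≠ j), letterConj h = α}

instance : (letterConjClosure ι).Normal := Subgroup.normalClosure_normal

theorem letterConj_mem_letterConjClosure {i j : ι} (h : i ≠ j) :
    letterConj h ∈ letterConjClosure ι := Subgroup.subset_normalClosure ⟨i, j, h, rfl⟩

theorem letterConjClosure_le {H : Subgroup (MulAut (FreeGroup ι))} [H.Normal]
    (hH : ∀ (i j : ι) (h : i ≠ j), letterConj h ∈ H) : letterConjClosure ι ≤ H :=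
  Subgroup.normalClosure_le_normal <| by
    rintro _ ⟨i, j, h, rfl⟩
    exact hH i j h

end IA

section TransvectionRelations

variable {ι : Type*} [DecidableEq ι]

theorem transvection_conj_transvection {i j k : ι} (hij : i ≠ j) (hjk : j ≠ k) (hik : i ≠ k) :
    transvection hjk * transvection hij * (transvection hjk)⁻¹ =
      transvection hij * transvection hik := by
  rw [← extend_transvection hij hik hjk, transvection.eq_def hij, extend_conj_rightMul, letter,
    transvection_self, map_mul]
  rfl

theorem letterConj_conj_transvection {i j k : ι} (hij : i ≠ j) (hjk : j ≠ k) (hik : i ≠ k) :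
    letterConj hjk * transvection hij * (letterConj hjk)⁻¹ =
      (transvection hik)⁻¹ * transvection hij * transvection hik := by
  rw [← extend_letterConj hij hik hjk, transvection.eq_def hij, extend_conj_rightMul, letter,
    letterConj_self, map_mul, map_mul, map_inv]
  rfl

theorem transvection_commute {i j k l : ι} (hij : i ≠ j) (hkl : k ≠ l) (hjk : j ≠ k)
    (hil : i ≠ l) (hik : i ≠ k) : Commute (transvection hij) (transvection hkl) := by
  refine aut_ext fun x => ?_
  obtain rfl | hix := eq_or_ne i x
  · simp [transvection_of_ne hkl hik.symm, transvection_of_ne hkl hjk.symm]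
  obtain rfl | hkx := eq_or_ne k x
  · simp [transvection_of_ne hij hik, transvection_of_ne hij hil]
  · simp [transvection_of_ne hij hix, transvection_of_ne hkl hkx]

theorem transvection_pow_self {i j : ι} (h : i ≠ j) (m : ℕ) :
    (transvection h ^ m) (of i) = of i * of j ^ m := by
  rw [transvection, ← map_pow, rightMul_apply, bothMul_self, map_pow]
  simp

theorem transvection_pow_conj_letterConj {i j k : ι} (hij : i ≠ j) (hjk : j ≠ k) (hik : i ≠ k)
    (m : ℕ) : transvection hjk ^ m * letterConj hij * (transvection hjk ^ m)⁻¹ =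
      letterConj hij * letterConj hik ^ m := by
  rw [← extend_transvection hij hik hjk, ← map_pow, letterConj, extend_conj_partialConj, letter,
    transvection_pow_self, map_mul, map_pow]
  rfl

end TransvectionRelations

section SteinbergQuotient

open commutatorElement

variable {ι Q : Type*} [DecidableEq ι] [Group Q]

/-- The transvections as a family indexed by all pairs, with junk value `1` on the diagonal. -/
def transvectionFamily (i j : ι) : MulAut (FreeGroup ι) :=
  if h : i ≠ j then transvection h else 1

theorem transvectionFamily_of_ne {i j : ι} (h : i ≠ j) :
    transvectionFamily i j = transvection h := dif_pos h

variable {π : MulAut (FreeGroup ι) →* Q}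

theorem isSteinberg_of_map_letterConj (hπ : ∀ (i j : ι) (h : i ≠ j), π (letterConj h) = 1) :
    IsSteinberg fun i j : ι => π (transvectionFamily i j) where
  conj i j k hij hjk hik := by
    simp only [transvectionFamily_of_ne hij, transvectionFamily_of_ne hjk,
      transvectionFamily_of_ne hik, ← map_mul, ← map_inv,
      transvection_conj_transvection hij hjk hik]
  commute i j k l hij hkl hjk hil := by
    simp only [transvectionFamily_of_ne hij, transvectionFamily_of_ne hkl]
    obtain rfl | hik := eq_or_ne i k
    · obtain rfl | hjl := eq_or_ne j l
      · exact .refl _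
      have hconj := congrArg π (letterConj_conj_transvection hij hjl hil)
      simp only [map_mul, map_inv, hπ, one_mul, inv_one, mul_one] at hconj
      rw [mul_assoc, eq_inv_mul_iff_mul_eq] at hconj
      exact hconj.symm
    · exact (transvection_commute hij hkl hjk hil hik).map π

theorem map_transvectionSubgroup_le (hπ : ∀ (i j : ι) (h : i ≠ j), π (letterConj h) = 1) :
    (transvectionSubgroup ι).map π ≤
      rootSubgroup (fun i j : ι => π (transvectionFamily i j)) fun _ _ => True := by
  have hmem : ∀ {i j : ι} (h : i ≠ j), π (transvection h) ∈
      rootSubgroup (fun i j : ι => π (transvectionFamily i j)) fun _ _ => True := fun h => by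
    rw [← transvectionFamily_of_ne h]
    exact mem_rootSubgroup (e := fun i j : ι => π (transvectionFamily i j)) h trivial
  rw [Subgroup.map_le_iff_le_comap, transvectionSubgroup, Subgroup.closure_le]
  rintro _ ⟨i, j, h, rfl | rfl⟩
  · exact hmem h
  · have hone := hπ i j h
    rw [letterConj_eq_leftTransvection_mul_transvection, map_mul] at hone
    rw [SetLike.mem_coe, Subgroup.mem_comap, eq_inv_of_mul_eq_one_left hone]
    exact inv_mem (hmem h)

theorem finiteIndex_commutator_sup_letterConjClosure [Finite ι] (h3 : 3 ≤ Nat.card ι)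
    (S : Subgroup (MulAut (FreeGroup ι))) [S.Normal] [S.FiniteIndex] :
    (⁅S, S⁆ ⊔ letterConjClosure ι).FiniteIndex := by
  set L := ⁅S, S⁆ ⊔ letterConjClosure ι
  let π := QuotientGroup.mk' L
  have hπ : ∀ (i j : ι) (h : i ≠ j), π (letterConj h) = 1 := fun i j h =>
    (QuotientGroup.eq_one_iff _).2 (Subgroup.mem_sup_right (letterConj_mem_letterConjClosure h))
  have hsteinberg := isSteinberg_of_map_letterConj hπ
  have htors : ∀ i k, i ≠ k → IsOfFinOrder (π (transvectionFamily i k)) := fun i k hik => by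
    obtain ⟨j, hji, hjk⟩ := exists_ne_ne_of_three_le_card h3 i k
    refine hsteinberg.isOfFinOrder_of_commute_pow hji.symm hjk hik
      (Subgroup.FiniteIndex.index_ne_zero (H := S)) ?_
    rw [← map_pow, ← map_pow]
    exact commute_mk_of_mem le_sup_left (S.pow_index_mem _) (S.pow_index_mem _)
  have := hsteinberg.finite_rootSubgroup htors h3
  have hfin : Finite ((transvectionSubgroup ι).map π) :=
    Finite.of_injective _ (Subgroup.inclusion_injective (map_transvectionSubgroup_le hπ))
  have hrel : L.relIndex (transvectionSubgroup ι) ≠ 0 := by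
    rw [← QuotientGroup.ker_mk' L, Subgroup.relIndex_ker]
    exact Nat.card_pos.ne'
  have htop := (finiteIndex_transvectionSubgroup ι).index_ne_zero
  rw [← Subgroup.relIndex_top_right] at htop
  exact ⟨L.relIndex_top_right ▸ Subgroup.relIndex_ne_zero_trans hrel htop⟩

theorem letterConj_pow_index_mem_commutator [Finite ι] (h3 : 3 ≤ Nat.card ι)
    {N : Subgroup (MulAut (FreeGroup ι))} [N.Normal] (hN : iaSubgroup (FreeGroup ι) ≤ N) {i k : ι}
    (hik : i ≠ k) : letterConj hik ^ N.index ∈ ⁅N, N⁆ := by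
  obtain ⟨j, hji, hjk⟩ := exists_ne_ne_of_three_le_card h3 i k
  have hmem : letterConj hji.symm ∈ N := hN (partialConj_mem_iaSubgroup _ _)
  have hcomm : ⁅(letterConj hji.symm)⁻¹, transvection hjk ^ N.index⁆ =
      letterConj hik ^ N.index := by
    rw [commutatorElement_def, inv_inv, mul_assoc, mul_assoc, inv_mul_eq_iff_eq_mul, ← mul_assoc,
      transvection_pow_conj_letterConj hji.symm hjk hik]
  rw [← hcomm]
  exact Subgroup.commutator_mem_commutator (inv_mem hmem) (N.pow_index_mem _)

omit [DecidableEq ι] in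
theorem finiteIndex_commutator_of_iaSubgroup_le [Finite ι] (h3 : 3 ≤ Nat.card ι)
    (N : Subgroup (MulAut (FreeGroup ι))) [N.Normal] [N.FiniteIndex]
    (hN : iaSubgroup (FreeGroup ι) ≤ N) : ⁅N, N⁆.FiniteIndex := by
  classical
  have := fg_mulAut_freeGroup ι
  have := finiteIndex_commutator_sup_letterConjClosure h3 N
  have hle : ⁅N, N⁆ ⊔ letterConjClosure ι ≤ torsionModCommutator N :=
    sup_le (commutator_le_torsionModCommutator N) <| letterConjClosure_le fun i k hik =>
      ⟨hN (partialConj_mem_iaSubgroup _ _), isOfFinOrder_iff_pow_eq_one.2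
        ⟨N.index, Subgroup.FiniteIndex.index_ne_zero.pos, by
          rw [← map_pow]
          exact (QuotientGroup.eq_one_iff _).2 (letterConj_pow_index_mem_commutator h3 hN hik)⟩⟩
  have := Subgroup.finiteIndex_of_le hle
  exact finiteIndex_commutator_of_finiteIndex_torsionModCommutator

end SteinbergQuotient

section FreeGroupHoms

open commutatorElement

variable {α β G : Type*} [Group G]

theorem commute_map_of_forall_of {f : FreeGroup α →* G} {z : G} (h : ∀ j, Commute z (f (of j)))
    (x : FreeGroup α) : Commute z (f x) := by
  induction x using FreeGroup.induction_on with
  | C1 => simp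
  | of j => exact h j
  | inv_of j hj => rw [map_inv]; exact hj.inv_right
  | mul x y hx hy => rw [map_mul]; exact hx.mul_right hy

theorem commute_map_map_of_forall_of {f : FreeGroup α →* G} {g : FreeGroup β →* G}
    (h : ∀ j l, Commute (f (of j)) (g (of l))) (x : FreeGroup α) (y : FreeGroup β) :
    Commute (f x) (g y) :=
  (commute_map_of_forall_of (fun j => (commute_map_of_forall_of (h j) y).symm) x).symm

theorem commutator_freeGroup_le {H : Subgroup (FreeGroup α)} [H.Normal]
    (h : ∀ j l, j ≠ l → ⁅of j, of l⁆ ∈ H) : commutator (FreeGroup α) ≤ H := by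
  have hcomm : ∀ x y, Commute (QuotientGroup.mk' H x) (QuotientGroup.mk' H y) :=
    commute_map_map_of_forall_of fun j l => by
      obtain rfl | hjl := eq_or_ne j l
      · exact .refl _
      rw [← commutatorElement_eq_one_iff_commute, ← map_commutatorElement]
      exact (QuotientGroup.eq_one_iff _).2 (h j l hjl)
  rw [commutator_def, Subgroup.commutator_le]
  intro x _ y _
  rw [← QuotientGroup.eq_one_iff, ← QuotientGroup.mk'_apply, map_commutatorElement,
    commutatorElement_eq_one_iff_commute]
  exact hcomm x y

end FreeGroupHoms

section MagnusSubgroup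

open commutatorElement

variable {ι : Type*} [DecidableEq ι]

theorem abelianization_of_commutatorElement {G : Type*} [Group G] (x y : G) :
    Abelianization.of ⁅x, y⁆ = 1 := by
  rw [map_commutatorElement, commutatorElement_eq_one_iff_commute]
  exact .all _ _

variable (ι) in
/-- The subgroup generated by the automorphisms `xᵢ ↦ u⁻¹ xᵢ v` with `u ≡ v` modulo commutators.
It is all of `IA` by a theorem of Magnus, which is not needed here. -/
def magnusSubgroup : Subgroup (MulAut (FreeGroup ι)) :=
  Subgroup.closure {α | ∃ (i : ι) (u v : CoFree i),
    Abelianization.of u = Abelianization.of v ∧ bothMul i (u, v) = α}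

theorem bothMul_mem_magnusSubgroup (i : ι) {u v : CoFree i}
    (h : Abelianization.of u = Abelianization.of v) : bothMul i (u, v) ∈ magnusSubgroup ι :=
  Subgroup.subset_closure ⟨i, u, v, h, rfl⟩

theorem magnusSubgroup_le {Z : Subgroup (MulAut (FreeGroup ι))}
    (h : ∀ (i : ι) (u v : CoFree i), Abelianization.of u = Abelianization.of v →
      bothMul i (u, v) ∈ Z) : magnusSubgroup ι ≤ Z :=
  (Subgroup.closure_le _).2 <| by
    rintro _ ⟨i, u, v, huv, rfl⟩
    exact h i u v huv

theorem partialConj_mem_magnusSubgroup (i : ι) (w : CoFree i) :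
    partialConj i w ∈ magnusSubgroup ι := bothMul_mem_magnusSubgroup i rfl

theorem letterConj_mem_magnusSubgroup {i j : ι} (h : i ≠ j) :
    letterConj h ∈ magnusSubgroup ι := partialConj_mem_magnusSubgroup i _

theorem rightMul_commutatorElement_mem_magnusSubgroup (i : ι) (x y : CoFree i) :
    rightMul i ⁅x, y⁆ ∈ magnusSubgroup ι :=
  bothMul_mem_magnusSubgroup i (by rw [map_one, abelianization_of_commutatorElement])

theorem bothMul_eq_partialConj_mul_rightMul (i : ι) (u v : CoFree i) :
    bothMul i (u, v) = partialConj i u * rightMul i (u⁻¹ * v) := by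
  rw [partialConj_apply, rightMul_apply, ← map_mul]
  simp

theorem partialConj_mem_of_letterConj_mem {Z : Subgroup (MulAut (FreeGroup ι))} {i : ι}
    (h : ∀ (j : ι) (hj : i ≠ j), letterConj hj ∈ Z) (w : CoFree i) : partialConj i w ∈ Z := by
  induction w using FreeGroup.induction_on with
  | C1 => rw [map_one]; exact one_mem _
  | of j => exact h j j.2
  | inv_of j hj => rw [map_inv]; exact inv_mem hj
  | mul x y hx hy => rw [map_mul]; exact mul_mem hx hy

theorem bothMul_mem_of_partialConj_mem {Z : Subgroup (MulAut (FreeGroup ι))} {i : ι}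
    (hconj : ∀ w, partialConj i w ∈ Z)
    (hcomm : ∀ (j l : ι) (hj : i ≠ j) (hl : i ≠ l), j ≠ l →
      rightMul i ⁅letter hj, letter hl⁆ ∈ Z)
    {u v : CoFree i} (h : Abelianization.of u = Abelianization.of v) : bothMul i (u, v) ∈ Z := by
  have : (Z.comap (rightMul i)).Normal := ⟨fun c hc w => by
    rw [Subgroup.mem_comap, ← partialConj_conj_rightMul]
    exact mul_mem (mul_mem (hconj w) hc) (inv_mem (hconj w))⟩
  rw [bothMul_eq_partialConj_mul_rightMul]
  refine mul_mem (hconj u) ?_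
  refine commutator_freeGroup_le (H := Z.comap (rightMul i))
    (fun j l hjl => hcomm j l j.2 l.2 (Subtype.coe_ne_coe.2 hjl)) ?_
  rwa [← Abelianization.ker_of, MonoidHom.mem_ker, map_mul, map_inv, inv_mul_eq_one]

theorem extend_conj_bothMul_mem_magnusSubgroup (i : ι) (ν : MulAut (CoFree i)) {u v : CoFree i}
    (h : Abelianization.of u = Abelianization.of v) :
    extend i ν * bothMul i (u, v) * (extend i ν)⁻¹ ∈ magnusSubgroup ι := by
  rw [extend_conj_bothMul]
  exact bothMul_mem_magnusSubgroup i (congrArg ν.abelianizationCongr h)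

section Transvection

variable {a b : ι} (hab : a ≠ b)

theorem transvection_conj_letterConj_symm :
    transvection hab * letterConj hab.symm * (transvection hab)⁻¹ =
      letterConj hab * letterConj hab.symm := by
  rw [mul_inv_eq_iff_eq_mul]
  refine aut_ext fun x => ?_
  obtain rfl | hax := eq_or_ne a x
  · simp [letterConj_of_ne hab.symm hab.symm, letterConj_of_ne hab hab, mul_assoc]
  obtain rfl | hbx := eq_or_ne b x
  · simp [transvection_of_ne hab hab, letterConj_of_ne hab hab, mul_assoc]
  · simp [transvection_of_ne hab hax, letterConj_of_ne hab.symm hbx, letterConj_of_ne hab hax]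

theorem transvection_conj_letterConj {j : ι} (haj : a ≠ j) (hbj : b ≠ j) :
    transvection hab * letterConj hbj * (transvection hab)⁻¹ =
      rightMul a ⁅letter hab, (letter haj)⁻¹⁆ * letterConj hbj := by
  rw [mul_inv_eq_iff_eq_mul]
  refine aut_ext fun x => ?_
  obtain rfl | hax := eq_or_ne a x
  · simp [letterConj_of_ne hbj hab.symm, rightMul_apply, commutatorElement_def,
      bothMul_of_ne, haj, hab, mul_assoc]
  obtain rfl | hbx := eq_or_ne b x
  · simp [transvection_of_ne hab, rightMul_apply, commutatorElement_def, bothMul_of_ne, haj, hab]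
  · simp [transvection_of_ne hab hax, letterConj_of_ne hbj hbx, rightMul_apply,
      commutatorElement_def, bothMul_of_ne hax]

theorem transvection_conj_rightMul_commutatorElement {j l : ι} (haj : a ≠ j) (hbj : b ≠ j)
    (hal : a ≠ l) (hbl : b ≠ l) :
    transvection hab * rightMul b ⁅letter hbj, letter hbl⁆ * (transvection hab)⁻¹ =
      rightMul a ⁅letter hab * letter hal * (letter hab)⁻¹,
        letter hab * letter haj * (letter hab)⁻¹⁆ * rightMul b ⁅letter hbj, letter hbl⁆ := by
  rw [mul_inv_eq_iff_eq_mul]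
  refine aut_ext fun x => ?_
  obtain rfl | hax := eq_or_ne a x
  · simp [rightMul_apply, commutatorElement_def, bothMul_of_ne, haj, hal, hab, hab.symm, mul_assoc]
  obtain rfl | hbx := eq_or_ne b x
  · simp [transvection_of_ne hab, rightMul_apply, commutatorElement_def, bothMul_of_ne, haj, hal,
      hab, mul_assoc]
  · simp [transvection_of_ne hab hax, rightMul_apply, commutatorElement_def, bothMul_of_ne, hax,
      hbx]

theorem transvection_conj_bothMul {l : ι} (hal : a ≠ l) (hbl : b ≠ l) :
    transvection hab * bothMul b (letter hab.symm * (letter hbl)⁻¹ * (letter hab.symm)⁻¹,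
        (letter hbl)⁻¹) * (transvection hab)⁻¹ =
      letterConj hab * rightMul b ⁅letter hab.symm, letter hbl⁆ *
        partialConj a (letter hab * letter hal)⁻¹ := by
  rw [mul_inv_eq_iff_eq_mul]
  refine aut_ext fun x => ?_
  obtain rfl | hax := eq_or_ne a x
  · simp [rightMul_apply, partialConj_apply, commutatorElement_def, bothMul_of_ne,
      letterConj_of_ne, hbl, hab, hab.symm, mul_assoc]
  obtain rfl | hbx := eq_or_ne b x
  · simp [transvection_of_ne, letterConj_of_ne, rightMul_apply, partialConj_apply,
      commutatorElement_def, bothMul_of_ne, hal, hab, mul_assoc]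
  · simp [transvection_of_ne hab hax, letterConj_of_ne hab hax, rightMul_apply,
      partialConj_apply, commutatorElement_def, bothMul_of_ne, hax, hbx]

theorem transvection_conj_partialConj_mem_magnusSubgroup (w : CoFree b) :
    transvection hab * partialConj b w * (transvection hab)⁻¹ ∈ magnusSubgroup ι := by
  refine partialConj_mem_of_letterConj_mem
    (Z := (magnusSubgroup ι).comap (MulAut.conj (transvection hab)).toMonoidHom)
    (fun j hbj => ?_) w
  change transvection hab * letterConj hbj * (transvection hab)⁻¹ ∈ magnusSubgroup ι
  obtain rfl | haj := eq_or_ne a j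
  · rw [transvection_conj_letterConj_symm]
    exact mul_mem (letterConj_mem_magnusSubgroup _) (letterConj_mem_magnusSubgroup _)
  · rw [transvection_conj_letterConj hab haj hbj]
    exact mul_mem (rightMul_commutatorElement_mem_magnusSubgroup _ _ _)
      (letterConj_mem_magnusSubgroup _)

theorem transvection_conj_rightMul_mem_magnusSubgroup {l : ι} (hbl : b ≠ l) (hal : a ≠ l) :
    transvection hab * rightMul b ⁅letter hab.symm, letter hbl⁆ * (transvection hab)⁻¹ ∈
      magnusSubgroup ι := by
  set u := letter hab.symm * (letter hbl)⁻¹ * (letter hab.symm)⁻¹ with hu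
  have hsplit : rightMul b ⁅letter hab.symm, letter hbl⁆ =
      (partialConj b u)⁻¹ * bothMul b (u, (letter hbl)⁻¹) := by
    rw [bothMul_eq_partialConj_mul_rightMul, inv_mul_cancel_left, hu, commutatorElement_def]
    simp [mul_assoc]
  rw [hsplit, ← map_inv, ← conj_mul, transvection_conj_bothMul hab hal hbl]
  exact mul_mem (transvection_conj_partialConj_mem_magnusSubgroup hab _) <|
    mul_mem (mul_mem (letterConj_mem_magnusSubgroup _)
      (rightMul_commutatorElement_mem_magnusSubgroup _ _ _)) (partialConj_mem_magnusSubgroup _ _)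

theorem transvection_conj_bothMul_mem_magnusSubgroup {u v : CoFree b}
    (h : Abelianization.of u = Abelianization.of v) :
    transvection hab * bothMul b (u, v) * (transvection hab)⁻¹ ∈ magnusSubgroup ι := by
  refine bothMul_mem_of_partialConj_mem
    (Z := (magnusSubgroup ι).comap (MulAut.conj (transvection hab)).toMonoidHom)
    (transvection_conj_partialConj_mem_magnusSubgroup hab) (fun j l hj hl hjl => ?_) h
  change transvection hab * rightMul b ⁅letter hj, letter hl⁆ * (transvection hab)⁻¹ ∈
    magnusSubgroup ι
  obtain rfl | haj := eq_or_ne a j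
  · exact transvection_conj_rightMul_mem_magnusSubgroup hab hl hjl
  obtain rfl | hal := eq_or_ne a l
  · have := inv_mem (transvection_conj_rightMul_mem_magnusSubgroup hab hj hjl.symm)
    rwa [conj_inv, ← map_inv, commutatorElement_inv] at this
  · rw [transvection_conj_rightMul_commutatorElement hab haj hj hal hl]
    exact mul_mem (rightMul_commutatorElement_mem_magnusSubgroup _ _ _)
      (rightMul_commutatorElement_mem_magnusSubgroup _ _ _)

theorem transvection_conj_mem_magnusSubgroup {m : MulAut (FreeGroup ι)}
    (hm : m ∈ magnusSubgroup ι) :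
    transvection hab * m * (transvection hab)⁻¹ ∈ magnusSubgroup ι := by
  refine magnusSubgroup_le
    (Z := (magnusSubgroup ι).comap (MulAut.conj (transvection hab)).toMonoidHom)
    (fun i u v h => ?_) hm
  change transvection hab * bothMul i (u, v) * (transvection hab)⁻¹ ∈ magnusSubgroup ι
  obtain rfl | hia := eq_or_ne i a
  · rw [transvection, rightMul_apply, ← map_mul, ← map_inv, ← map_mul]
    exact bothMul_mem_magnusSubgroup i (by simp [h, mul_comm])
  obtain rfl | hib := eq_or_ne i b
  · exact transvection_conj_bothMul_mem_magnusSubgroup hab h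
  · rw [← extend_transvection hia hib hab]
    exact extend_conj_bothMul_mem_magnusSubgroup i _ h

end Transvection

/-- The automorphism inverting one letter. -/
def invertLetter (b : ι) : MulAut (FreeGroup ι) :=
  have h : (FreeGroup.lift fun j => if b = j then (of j)⁻¹ else of j).comp
      (FreeGroup.lift fun j => if b = j then (of j)⁻¹ else of j) = MonoidHom.id (FreeGroup ι) :=
    FreeGroup.ext_hom _ _ fun j => by by_cases hj : b = j <;> simp [hj]
  MonoidHom.toMulEquiv _ _ h h

@[simp] theorem invertLetter_self (b : ι) : invertLetter b (of b) = (of b)⁻¹ := by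
  simp [invertLetter]

theorem invertLetter_of_ne {b j : ι} (h : b ≠ j) : invertLetter b (of j) = of j := by
  simp [invertLetter, h]

@[simp] theorem invertLetter_incl (b : ι) (w : CoFree b) :
    invertLetter b (incl b w) = incl b w := by
  have : (invertLetter b).toMonoidHom.comp (incl b) = incl b :=
    FreeGroup.ext_hom _ _ fun j => by simp [invertLetter_of_ne j.2]
  exact DFunLike.congr_fun this w

theorem extend_invertLetter {i b : ι} (h : i ≠ b) :
    extend i (invertLetter (⟨b, h⟩ : {j // i ≠ j})) = invertLetter b := by
  refine aut_ext fun l => ?_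
  obtain rfl | hl := eq_or_ne i l
  · rw [extend_self, invertLetter_of_ne h.symm]
  rw [extend_of_ne hl, letter]
  obtain rfl | hbl := eq_or_ne b l
  · simp
  · rw [invertLetter_of_ne (by simpa using hbl), invertLetter_of_ne hbl, incl_of]

theorem invertLetter_conj_transvection {a b : ι} (hab : a ≠ b) :
    invertLetter b * transvection hab * (invertLetter b)⁻¹ = (transvection hab)⁻¹ := by
  rw [← extend_invertLetter hab, transvection, extend_conj_rightMul, letter, invertLetter_self,
    map_inv]

theorem invertLetter_conj_bothMul (b : ι) (u v : CoFree b) :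
    invertLetter b * bothMul b (u, v) * (invertLetter b)⁻¹ = bothMul b (v, u) := by
  rw [mul_inv_eq_iff_eq_mul]
  exact autExt_incl b (by simp [mul_assoc]) fun w => by simp

theorem invertLetter_conj_mem_magnusSubgroup (b : ι) {m : MulAut (FreeGroup ι)}
    (hm : m ∈ magnusSubgroup ι) :
    invertLetter b * m * (invertLetter b)⁻¹ ∈ magnusSubgroup ι := by
  refine magnusSubgroup_le
    (Z := (magnusSubgroup ι).comap (MulAut.conj (invertLetter b)).toMonoidHom)
    (fun i u v h => ?_) hm
  change invertLetter b * bothMul i (u, v) * (invertLetter b)⁻¹ ∈ magnusSubgroup ι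
  obtain rfl | hib := eq_or_ne i b
  · rw [invertLetter_conj_bothMul]
    exact bothMul_mem_magnusSubgroup i h.symm
  · rw [← extend_invertLetter hib]
    exact extend_conj_bothMul_mem_magnusSubgroup i _ h

theorem invertLetter_mul_self (b : ι) : invertLetter b * invertLetter b = 1 :=
  aut_ext fun j => by
    obtain rfl | h := eq_or_ne b j
    · simp
    · simp [invertLetter_of_ne h]

theorem transvection_inv_conj_mem_magnusSubgroup {a b : ι} (hab : a ≠ b)
    {m : MulAut (FreeGroup ι)} (hm : m ∈ magnusSubgroup ι) :
    (transvection hab)⁻¹ * m * transvection hab ∈ magnusSubgroup ι := by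
  have hinv : (invertLetter b)⁻¹ = invertLetter b := inv_eq_of_mul_eq_one_left
    (invertLetter_mul_self b)
  have := invertLetter_conj_mem_magnusSubgroup b <| transvection_conj_mem_magnusSubgroup hab <|
    invertLetter_conj_mem_magnusSubgroup b hm
  rw [← inv_inv (transvection hab), ← invertLetter_conj_transvection]
  simpa [mul_assoc, hinv] using this

theorem transvectionSubgroup_le_normalizer_magnusSubgroup :
    transvectionSubgroup ι ≤
      Subgroup.normalizer (magnusSubgroup ι : Set (MulAut (FreeGroup ι))) := by
  have htrans : ∀ {i j : ι} (h : i ≠ j),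
      transvection h ∈ Subgroup.normalizer (magnusSubgroup ι : Set (MulAut (FreeGroup ι))) :=
    fun h => Subgroup.mem_normalizer_iff.2 fun m =>
      ⟨transvection_conj_mem_magnusSubgroup h, fun hm => by
        simpa [mul_assoc] using transvection_inv_conj_mem_magnusSubgroup h hm⟩
  rw [transvectionSubgroup, Subgroup.closure_le]
  rintro _ ⟨i, j, h, rfl | rfl⟩
  · exact htrans h
  · rw [← mul_inv_eq_iff_eq_mul.2 (letterConj_eq_leftTransvection_mul_transvection h)]
    exact mul_mem (Subgroup.le_normalizer (letterConj_mem_magnusSubgroup h)) (inv_mem (htrans h))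

end MagnusSubgroup

/-! ### Virtual affine representations -/

section AffineGroup

/-- The group of affine transformations `z ↦ lin * z + trans` of the line over a field. -/
@[ext] structure Aff (K : Type*) [Field K] where
  /-- The linear part. -/
  lin : Kˣ
  /-- The translation part. -/
  trans : K

namespace Aff

variable {K : Type*} [Field K]

instance : Mul (Aff K) := ⟨fun x y => ⟨x.lin * y.lin, x.trans + x.lin * y.trans⟩⟩

instance : One (Aff K) := ⟨⟨1, 0⟩⟩

instance : Inv (Aff K) := ⟨fun x => ⟨x.lin⁻¹, -((x.lin⁻¹ : Kˣ) * x.trans)⟩⟩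

@[simp] theorem lin_mul (x y : Aff K) : (x * y).lin = x.lin * y.lin := rfl

@[simp] theorem trans_mul (x y : Aff K) : (x * y).trans = x.trans + x.lin * y.trans := rfl

@[simp] theorem lin_one : (1 : Aff K).lin = 1 := rfl

@[simp] theorem trans_one : (1 : Aff K).trans = 0 := rfl

@[simp] theorem lin_inv (x : Aff K) : x⁻¹.lin = x.lin⁻¹ := rfl

@[simp] theorem trans_inv (x : Aff K) : x⁻¹.trans = -((x.lin⁻¹ : Kˣ) * x.trans) := rfl

instance : Group (Aff K) := Group.ofLeftAxioms
  (fun x y z => by ext <;> simp [mul_assoc, mul_add, add_assoc]) (fun x => by ext <;> simp)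
  (fun x => by ext <;> simp)

/-- The linear part, as a homomorphism. -/
def linHom : Aff K →* Kˣ where
  toFun := lin
  map_one' := rfl
  map_mul' _ _ := rfl

@[simp] theorem linHom_apply (x : Aff K) : linHom x = x.lin := rfl

@[simp] theorem lin_pow (x : Aff K) (m : ℕ) : (x ^ m).lin = x.lin ^ m := map_pow linHom x m

theorem coe_lin_sub_one_ne_zero {x : Aff K} (h : x.lin ≠ 1) : (x.lin : K) - 1 ≠ 0 :=
  sub_ne_zero.2 fun h' => h (Units.ext h')

theorem commute_iff {x y : Aff K} :
    Commute x y ↔ ((x.lin : K) - 1) * y.trans = ((y.lin : K) - 1) * x.trans := by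
  rw [commute_iff_eq, Aff.ext_iff]
  simp only [lin_mul, trans_mul, mul_comm x.lin y.lin, true_and]
  constructor <;> intro h <;> linear_combination h

theorem commute_of_lin_eq_one {x y : Aff K} (hx : x.lin = 1) (hy : y.lin = 1) : Commute x y := by
  simp [commute_iff, hx, hy]

theorem eq_one_of_commute {x y : Aff K} (hx : x.lin = 1) (hy : y.lin ≠ 1) (h : Commute x y) :
    x = 1 := by
  rw [commute_iff, hx] at h
  exact Aff.ext hx (by simpa [coe_lin_sub_one_ne_zero hy] using h.symm)

theorem commute_trans {x y z : Aff K} (hy : y ≠ 1) (hxy : Commute x y) (hyz : Commute y z) :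
    Commute x z := by
  by_cases hlin : y.lin = 1
  · have hone : ∀ {w : Aff K}, Commute y w → w.lin = 1 := fun h =>
      by_contra fun hw => hy (eq_one_of_commute hlin hw h)
    exact commute_of_lin_eq_one (hone hxy.symm) (hone hyz)
  · rw [commute_iff] at *
    apply mul_left_cancel₀ (coe_lin_sub_one_ne_zero hlin)
    linear_combination ((x.lin : K) - 1) * hyz + ((z.lin : K) - 1) * hxy

theorem trans_pow {x : Aff K} (hx : x.lin = 1) (m : ℕ) : (x ^ m).trans = m * x.trans := by
  induction m with
  | zero => simp
  | succ m ih => simp [pow_succ, hx, ih, add_mul]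

variable [CharZero K]

theorem eq_one_of_pow_eq_one {x : Aff K} (hx : x.lin = 1) {m : ℕ} (hm : m ≠ 0) (h : x ^ m = 1) :
    x = 1 := by
  have htrans := trans_pow hx m
  rw [h] at htrans
  exact Aff.ext hx (by simpa [hm] using htrans.symm)

theorem commute_of_commute_conj {x y : Aff K} {m : ℕ} (hm : m ≠ 0) (hx : x ^ m = 1)
    (h : Commute x (y * x * y⁻¹)) : Commute y x := by
  by_cases hlin : x.lin = 1
  · rw [eq_one_of_pow_eq_one hlin hm hx]
    exact .one_right _
  · rw [commute_iff] at h ⊢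
    have hconj : (y * x * y⁻¹).lin = x.lin := by simp
    rw [hconj] at h
    have htrans := mul_left_cancel₀ (coe_lin_sub_one_ne_zero hlin) h
    simp only [trans_mul, lin_mul, trans_inv, Units.val_mul] at htrans
    linear_combination htrans + x.lin * y.trans * y.lin.mul_inv

end Aff

end AffineGroup

section VirtualAffineRep

open commutatorElement

/-- An affine representation of a normal subgroup `domain` of `G`, extended to `G` by junk values,
such that all `exponent`-th powers lie in the domain and act by translations. -/
structure VirtualAffineRep (K : Type*) [Field K] (G : Type*) [Group G] where
  /-- The representation; its values outside the domain are irrelevant. -/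
  toFun : G → Aff K
  /-- The subgroup on which the representation is multiplicative. -/
  domain : Subgroup G
  normal : domain.Normal
  map_mul' : ∀ x ∈ domain, ∀ y ∈ domain, toFun (x * y) = toFun x * toFun y
  /-- An exponent of `G` modulo the kernel of the linear part. -/
  exponent : ℕ
  exponent_ne_zero : exponent ≠ 0
  pow_exponent_mem : ∀ s, s ^ exponent ∈ domain
  lin_pow_exponent : ∀ s, (toFun (s ^ exponent)).lin = 1

namespace VirtualAffineRep

variable {K : Type*} [Field K] {G H : Type*} [Group G] [Group H]

instance : CoeFun (VirtualAffineRep K G) fun _ => G → Aff K := ⟨toFun⟩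

attribute [instance] VirtualAffineRep.normal

variable (V : VirtualAffineRep K G)

protected theorem map_mul {x y : G} (hx : x ∈ V.domain) (hy : y ∈ V.domain) :
    V (x * y) = V x * V y :=
  V.map_mul' x hx y hy

/-- The composition with a homomorphism into the domain. -/
def comp (φ : H →* G) (h : ∀ x, φ x ∈ V.domain) : H →* Aff K :=
  MonoidHom.mk' (fun x => V (φ x)) fun x y => by rw [φ.map_mul, V.map_mul (h x) (h y)]

@[simp] theorem comp_apply (φ : H →* G) (h : ∀ x, φ x ∈ V.domain) (x : H) :
    V.comp φ h x = V (φ x) := rfl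

/-- The representation as a homomorphism on the domain. -/
def restrict : V.domain →* Aff K := V.comp V.domain.subtype fun x => x.2

protected theorem map_inv {x : G} (hx : x ∈ V.domain) : V x⁻¹ = (V x)⁻¹ :=
  V.restrict.map_inv ⟨x, hx⟩

protected theorem map_pow {x : G} (hx : x ∈ V.domain) (m : ℕ) : V (x ^ m) = V x ^ m :=
  V.restrict.map_pow ⟨x, hx⟩ m

theorem map_conj {x y : G} (hx : x ∈ V.domain) (hy : y ∈ V.domain) :
    V (x * y * x⁻¹) = V x * V y * (V x)⁻¹ := by
  rw [V.map_mul (mul_mem hx hy) (inv_mem hx), V.map_mul hx hy, V.map_inv hx]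

protected theorem map_commutatorElement {x y : G} (hx : x ∈ V.domain) (hy : y ∈ V.domain) :
    V ⁅x, y⁆ = ⁅V x, V y⁆ :=
  map_commutatorElement V.restrict ⟨x, hx⟩ ⟨y, hy⟩

theorem commute {x y : G} (hx : x ∈ V.domain) (hy : y ∈ V.domain) (h : Commute x y) :
    Commute (V x) (V y) := by
  rw [commute_iff_eq, ← V.map_mul hx hy, h.eq, V.map_mul hy hx]

theorem conj_mem {x : G} (hx : x ∈ V.domain) (s : G) : s * x * s⁻¹ ∈ V.domain :=
  V.normal.conj_mem x hx s

/-- The elements of the domain that are represented in a subgroup of the affine group. -/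
def preimage (S : Subgroup (Aff K)) : Subgroup G := (S.comap V.restrict).map V.domain.subtype

theorem mem_preimage {S : Subgroup (Aff K)} {x : G} :
    x ∈ V.preimage S ↔ x ∈ V.domain ∧ V x ∈ S := by
  constructor
  · rintro ⟨y, hy, rfl⟩
    exact ⟨y.2, hy⟩
  · rintro ⟨hx, hS⟩
    exact ⟨⟨x, hx⟩, hS, rfl⟩

theorem commutator_le_preimage_bot {M : Subgroup G} (hM : M ≤ V.domain)
    (h : ∀ x ∈ M, ∀ y ∈ M, Commute (V x) (V y)) : ⁅M, M⁆ ≤ V.preimage ⊥ := by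
  rw [Subgroup.commutator_le]
  intro x hx y hy
  refine V.mem_preimage.2 ⟨Subgroup.commutator_le_left V.domain V.domain
    (Subgroup.commutator_mem_commutator (hM hx) (hM hy)), ?_⟩
  rw [V.map_commutatorElement (hM hx) (hM hy), Subgroup.mem_bot,
    commutatorElement_eq_one_iff_commute]
  exact h x hx y hy

theorem lin_eq_one_of_mem_commutator {u : G} (hu : u ∈ ⁅V.domain, V.domain⁆) :
    (V u).lin = 1 := by
  have hle : ⁅V.domain, V.domain⁆ ≤ V.preimage Aff.linHom.ker := by
    rw [Subgroup.commutator_le]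
    intro x hx y hy
    refine V.mem_preimage.2 ⟨Subgroup.commutator_le_left V.domain V.domain
      (Subgroup.commutator_mem_commutator hx hy), ?_⟩
    rw [V.map_commutatorElement hx hy, MonoidHom.mem_ker, map_commutatorElement,
      commutatorElement_eq_one_iff_commute]
    exact .all _ _
  exact (V.mem_preimage.1 (hle hu)).2

/-- The pullback along a homomorphism. -/
def comap (φ : H →* G) : VirtualAffineRep K H where
  toFun x := V (φ x)
  domain := V.domain.comap φ
  normal := inferInstance
  map_mul' x hx y hy := by rw [φ.map_mul, V.map_mul hx hy]
  exponent := V.exponent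
  exponent_ne_zero := V.exponent_ne_zero
  pow_exponent_mem s := by
    rw [Subgroup.mem_comap, φ.map_pow]
    exact V.pow_exponent_mem _
  lin_pow_exponent s := by
    rw [φ.map_pow]
    exact V.lin_pow_exponent _

/-- The conjugate of a representation by an element of the ambient group. -/
abbrev conj (s : G) : VirtualAffineRep K G := V.comap (MulAut.conj s).toMonoidHom

theorem conj_apply (s x : G) : V.conj s x = V (s * x * s⁻¹) := rfl

theorem domain_conj (s : G) : (V.conj s).domain = V.domain := by
  ext x
  refine ⟨fun h => ?_, fun h => V.conj_mem h s⟩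
  simpa [comap, mul_assoc] using V.conj_mem h s⁻¹

theorem eq_one_of_conj_eq_one (s : G)
    (h : ∀ u ∈ ⁅(V.conj s).domain, (V.conj s).domain⁆, V.conj s u = 1) {u : G}
    (hu : u ∈ ⁅V.domain, V.domain⁆) : V u = 1 := by
  have hu' := h (s⁻¹ * u * s) <| by
    rw [V.domain_conj]
    simpa using Subgroup.Normal.conj_mem inferInstance u hu s⁻¹
  simpa [V.conj_apply, mul_assoc] using hu'

end VirtualAffineRep

end VirtualAffineRep

section InnerAutomorphisms

namespace VirtualAffineRep

variable {K : Type*} [Field K] {ι : Type*} (V : VirtualAffineRep K (MulAut (FreeGroup ι)))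
  (hIA : iaSubgroup (FreeGroup ι) ≤ V.domain)

/-- The affine representation of a free group by its inner automorphisms. -/
def inner : FreeGroup ι →* Aff K := V.comp MulAut.conj fun w => hIA (conj_mem_iaSubgroup w)

theorem inner_apply (w : FreeGroup ι) : V.inner hIA w = V (MulAut.conj w) := rfl

theorem inner_map {s : MulAut (FreeGroup ι)} (hs : s ∈ V.domain) (w : FreeGroup ι) :
    V.inner hIA (s w) = V s * V.inner hIA w * (V s)⁻¹ := by
  simp only [inner_apply, ← conj_conj]
  exact V.map_conj hs (hIA (conj_mem_iaSubgroup w))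

theorem commute_inner_of_apply_eq {s : MulAut (FreeGroup ι)} (hs : s ∈ V.domain)
    {w : FreeGroup ι} (h : s w = w) : Commute (V s) (V.inner hIA w) := by
  have hw := V.inner_map hIA hs w
  rwa [h, eq_mul_inv_iff_mul_eq, eq_comm] at hw

include hIA in
theorem iaSubgroup_le_domain_conj (s : MulAut (FreeGroup ι)) :
    iaSubgroup (FreeGroup ι) ≤ (V.conj s).domain :=
  hIA.trans (V.domain_conj s).ge

theorem inner_conj (s : MulAut (FreeGroup ι)) (w : FreeGroup ι) :
    (V.conj s).inner (V.iaSubgroup_le_domain_conj hIA s) w = V.inner hIA (s w) := by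
  rw [inner_apply, inner_apply, conj_apply, conj_conj]

section DecidableEq

variable [DecidableEq ι]

theorem inner_pow_exponent_of_commute {p c : ι} (h : p ≠ c)
    (hcomm : Commute (V (transvection h ^ V.exponent)) (V.inner hIA (of p))) :
    V.inner hIA (of c) ^ V.exponent = 1 := by
  have hp := V.inner_map hIA (V.pow_exponent_mem (transvection h)) (of p)
  rwa [hcomm.eq, mul_inv_cancel_right, transvection_pow_self, map_mul, map_pow,
    mul_eq_left] at hp

theorem commute_inner_of_commute_letterConj {x y : ι} (h : x ≠ y)
    (hcomm : Commute (V (letterConj h)) (V.inner hIA (of x))) :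
    Commute (V.inner hIA (of x)) (V.inner hIA (of y)) := by
  have hx := V.inner_map hIA (hIA (letterConj_mem_iaSubgroup h)) (of x)
  rw [hcomm.eq, mul_inv_cancel_right, letterConj_self, map_mul, map_mul, map_inv, mul_assoc,
    inv_mul_eq_iff_eq_mul] at hx
  exact hx

theorem commute_letterConj_inner {x y z : ι} (h : x ≠ y) (hz : x ≠ z) :
    Commute (V (letterConj h)) (V.inner hIA (of z)) :=
  V.commute_inner_of_apply_eq hIA (hIA (letterConj_mem_iaSubgroup h)) (letterConj_of_ne h hz)

end DecidableEq

theorem inner_pow_exponent [Finite ι] (h3 : 3 ≤ Nat.card ι) (c : ι) :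
    V.inner hIA (of c) ^ V.exponent = 1 := by
  classical
  obtain ⟨d, hdc, -⟩ := exists_ne_ne_of_three_le_card h3 c c
  obtain ⟨e, hec, hed⟩ := exists_ne_ne_of_three_le_card h3 c d
  by_cases hlin : (V.inner hIA (of d)).lin = 1
  · exact V.inner_pow_exponent_of_commute hIA hdc
      (Aff.commute_of_lin_eq_one (V.lin_pow_exponent _) hlin)
  · have hfix : (transvection hec ^ V.exponent) (of d) = of d := by
      rw [transvection, ← map_pow, rightMul_apply, bothMul_of_ne hed]
    have hone : V (transvection hec ^ V.exponent) = 1 :=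
      Aff.eq_one_of_commute (V.lin_pow_exponent _) hlin
        (V.commute_inner_of_apply_eq hIA (V.pow_exponent_mem _) hfix)
    exact V.inner_pow_exponent_of_commute hIA hec (hone ▸ .one_left _)

theorem commute_inner_of_inner_eq_one {x y z : ι} (hxy : x ≠ y) (hzx : z ≠ x) (hzy : z ≠ y)
    (hz : V.inner hIA (of z) = 1) : Commute (V.inner hIA (of x)) (V.inner hIA (of y)) := by
  classical
  -- Conjugating `V` by `z ↦ z * x` gives `z` the nontrivial value at `x`.
  set s := transvection hzx with hs
  have hIA' := V.iaSubgroup_le_domain_conj hIA s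
  have hx : (V.conj s).inner hIA' (of x) = V.inner hIA (of x) := by
    rw [V.inner_conj hIA, hs, transvection_of_ne hzx hzx]
  have hy : (V.conj s).inner hIA' (of y) = V.inner hIA (of y) := by
    rw [V.inner_conj hIA, hs, transvection_of_ne hzx hzy]
  have hzx' : (V.conj s).inner hIA' (of z) = (V.conj s).inner hIA' (of x) := by
    rw [hx, V.inner_conj hIA, hs, transvection_self, map_mul, hz, one_mul]
  rw [← hx, ← hy]
  apply (V.conj s).commute_inner_of_commute_letterConj hIA' hxy
  rw [← hzx']
  exact (V.conj s).commute_letterConj_inner hIA' hxy hzx.symm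

theorem commute_inner_or {x y z : ι} (hxy : x ≠ y) (hxz : x ≠ z) :
    Commute (V.inner hIA (of x)) (V.inner hIA (of y)) ∨
      Commute (V.inner hIA (of y)) (V.inner hIA (of z)) := by
  classical
  by_cases hK : V (letterConj hxy) = 1
  · exact .inl (V.commute_inner_of_commute_letterConj hIA hxy (hK ▸ .one_left _))
  · exact .inr (Aff.commute_trans hK (V.commute_letterConj_inner hIA hxy hxy).symm
      (V.commute_letterConj_inner hIA hxy hxz))

variable [Finite ι] (h3 : 3 ≤ Nat.card ι)

include h3

theorem commute_inner_of_of (x y : ι) :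
    Commute (V.inner hIA (of x)) (V.inner hIA (of y)) := by
  obtain rfl | hxy := eq_or_ne x y
  · exact .refl _
  obtain ⟨z, hzx, hzy⟩ := exists_ne_ne_of_three_le_card h3 x y
  by_cases hz : V.inner hIA (of z) = 1
  · exact V.commute_inner_of_inner_eq_one hIA hxy hzx hzy hz
  · obtain h | hyz := V.commute_inner_or hIA hxy hzx.symm
    · exact h
    obtain h | hxz := V.commute_inner_or hIA hxy.symm hzy.symm
    · exact h.symm
    · exact Aff.commute_trans hz hxz hyz.symm

theorem commute_inner (v w : FreeGroup ι) : Commute (V.inner hIA v) (V.inner hIA w) :=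
  commute_map_map_of_forall_of (V.commute_inner_of_of hIA h3) v w

theorem commute_map_inner [CharZero K] {s : MulAut (FreeGroup ι)} (hs : s ∈ V.domain)
    (w : FreeGroup ι) : Commute (V s) (V.inner hIA w) := by
  refine commute_map_of_forall_of (fun j => ?_) w
  apply Aff.commute_of_commute_conj V.exponent_ne_zero (V.inner_pow_exponent hIA h3 j)
  rw [← V.inner_map hIA hs]
  exact V.commute_inner hIA h3 _ _

end VirtualAffineRep

end InnerAutomorphisms

section CommutatorMaps

variable {G H : Type*} [Group G] [Group H]

theorem map_eq_one_of_mem_commutator {f : G →* H} (hf : ∀ x y, Commute (f x) (f y)) {c : G}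
    (hc : c ∈ commutator G) : f c = 1 := by
  have hle : commutator G ≤ f.ker :=
    Subgroup.commutator_le.2 fun x _ y _ => by
      rw [MonoidHom.mem_ker, map_commutatorElement, commutatorElement_eq_one_iff_commute]
      exact hf x y
  exact hle hc

theorem map_eq_map_of_mem_commutator_of_inv_mul_mem_center {α β : G →* H}
    (h : ∀ x, (β x)⁻¹ * α x ∈ Subgroup.center H) {c : G} (hc : c ∈ commutator G) :
    α c = β c := by
  let δ : G →* Subgroup.center H := MonoidHom.mk' (fun x => ⟨(β x)⁻¹ * α x, h x⟩) fun x y =>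
    Subtype.ext <| by
      have hcomm := Subgroup.mem_center_iff.1 (h x) (β y)⁻¹
      simp only [map_mul, mul_inv_rev, Subgroup.coe_mul]
      rw [← mul_assoc _ (β y)⁻¹, ← hcomm]
      simp only [mul_assoc]
  have hδ : δ c = 1 := map_eq_one_of_mem_commutator
    (fun x y => Subtype.ext (Subgroup.mem_center_iff.1 (h y) _)) hc
  exact (inv_mul_eq_one.1 (congrArg Subtype.val hδ)).symm

theorem inv_mul_mem_commutator {ν : MulAut G} (hν : ν ∈ iaSubgroup G) (x : G) :
    x⁻¹ * ν x ∈ commutator G :=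
  QuotientGroup.eq.1 (mem_iaSubgroup.1 hν x).symm

theorem inv_mul_mem_commutator_commutator {ν : MulAut G} (hν : ν ∈ iaSubgroup G) {c : G}
    (hc : c ∈ commutator G) : c⁻¹ * ν c ∈ ⁅commutator G, (⊤ : Subgroup G)⁆ := by
  set M := ⁅commutator G, (⊤ : Subgroup G)⁆
  have hcenter : ∀ x ∈ commutator G, QuotientGroup.mk' M x ∈ Subgroup.center (G ⧸ M) := by
    intro x hx
    rw [Subgroup.mem_center_iff]
    intro y
    obtain ⟨y, rfl⟩ := QuotientGroup.mk'_surjective M y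
    rw [eq_comm, ← commutatorElement_eq_one_iff_mul_comm, ← map_commutatorElement,
      QuotientGroup.mk'_apply, QuotientGroup.eq_one_iff]
    exact Subgroup.commutator_mem_commutator hx (Subgroup.mem_top y)
  refine QuotientGroup.eq.1 (map_eq_map_of_mem_commutator_of_inv_mul_mem_center
    (α := (QuotientGroup.mk' M).comp ν.toMonoidHom) (β := QuotientGroup.mk' M)
    (fun x => ?_) hc).symm
  rw [MonoidHom.comp_apply, ← map_inv, ← map_mul]
  exact hcenter _ (inv_mul_mem_commutator hν x)

end CommutatorMaps

section PartialConjugations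

open commutatorElement

theorem three_le_card_ne {ι : Type*} [Finite ι] (h4 : 4 ≤ Nat.card ι) (i : ι) :
    3 ≤ Nat.card {j // i ≠ j} := by
  have := Fintype.ofFinite ι
  classical
  rw [Nat.card_eq_fintype_card] at h4 ⊢
  rw [Fintype.card_subtype_compl, Fintype.card_subtype_eq' i]
  omega

variable {ι : Type*} [DecidableEq ι]

theorem extend_mem_iaSubgroup (i : ι) {ν : MulAut (CoFree i)} (hν : ν ∈ iaSubgroup (CoFree i)) :
    extend i ν ∈ iaSubgroup (FreeGroup ι) := by
  refine mem_iaSubgroup_of_forall_of fun j => ?_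
  obtain rfl | hj := eq_or_ne i j
  · rw [extend_self]
  · rw [extend_of_ne hj, ← incl_letter hj]
    exact congrArg (Abelianization.map (incl i)) (mem_iaSubgroup.1 hν _)

theorem bothMul_mem_iaSubgroup (i : ι) {u v : CoFree i}
    (h : Abelianization.of u = Abelianization.of v) :
    bothMul i (u, v) ∈ iaSubgroup (FreeGroup ι) := by
  rw [bothMul_eq_partialConj_mul_rightMul]
  exact mul_mem (partialConj_mem_iaSubgroup i u)
    (rightMul_mem_iaSubgroup i (QuotientGroup.eq.1 h))

namespace VirtualAffineRep

variable {K : Type*} [Field K] (V : VirtualAffineRep K (MulAut (FreeGroup ι)))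
  (hIA : iaSubgroup (FreeGroup ι) ≤ V.domain) (hI : ∀ w, V (MulAut.conj w) = 1)

include hIA

theorem iaSubgroup_le_domain_comap_extend (i : ι) :
    iaSubgroup (CoFree i) ≤ (V.comap (extend i)).domain :=
  fun _ hν => hIA (extend_mem_iaSubgroup i hν)

include hI

theorem inner_comap_extend (i : ι) (w : CoFree i) :
    (V.comap (extend i)).inner (V.iaSubgroup_le_domain_comap_extend hIA i) w =
      V (partialConj i w) := by
  change V (extend i (MulAut.conj w)) = V (partialConj i w)
  rw [extend_conj, V.map_mul (hIA (conj_mem_iaSubgroup _)) (hIA (partialConj_mem_iaSubgroup i w)),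
    hI, one_mul]

variable [Finite ι] (h4 : 4 ≤ Nat.card ι)

include h4

theorem letterConj_pow_exponent {i j : ι} (h : i ≠ j) : V (letterConj h) ^ V.exponent = 1 := by
  rw [letterConj, ← V.inner_comap_extend hIA hI]
  exact (V.comap (extend i)).inner_pow_exponent _ (three_le_card_ne h4 i) ⟨j, h⟩

theorem partialConj_eq_one_of_mem_commutator (i : ι) {c : CoFree i}
    (hc : c ∈ commutator (CoFree i)) : V (partialConj i c) = 1 := by
  rw [← V.inner_comap_extend hIA hI]
  exact map_eq_one_of_mem_commutator
    ((V.comap (extend i)).commute_inner _ (three_le_card_ne h4 i)) hc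

theorem leftMul_mul_rightMul_conj_eq_one (i : ι) {c : CoFree i} (hc : c ∈ commutator (CoFree i))
    (b : CoFree i) : V (leftMul i c * rightMul i (b * c * b⁻¹)) = 1 := by
  have hconj : rightMul i b * partialConj i c * (rightMul i b)⁻¹ =
      leftMul i c * rightMul i (b * c * b⁻¹) := by
    rw [partialConj_eq_leftMul_mul_rightMul, ← mul_assoc, ← (leftMul_commute_rightMul i c b).eq]
    simp only [map_mul, map_inv, mul_assoc]
  rw [← hconj, ← V.conj_apply]
  exact (V.conj (rightMul i b)).partialConj_eq_one_of_mem_commutator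
    (V.iaSubgroup_le_domain_conj hIA _) (fun w => by rw [V.conj_apply, conj_conj, hI]) h4 i hc

theorem rightMul_conj (i : ι) {c : CoFree i} (hc : c ∈ commutator (CoFree i)) (b : CoFree i) :
    V (rightMul i (b * c * b⁻¹)) = V (rightMul i c) := by
  have hleft : leftMul i c ∈ V.domain := by
    rw [eq_mul_inv_of_mul_eq (partialConj_eq_leftMul_mul_rightMul i c).symm]
    exact hIA (mul_mem (partialConj_mem_iaSubgroup i c) (inv_mem (rightMul_mem_iaSubgroup i hc)))
  have hright : ∀ b, V (rightMul i (b * c * b⁻¹)) = (V (leftMul i c))⁻¹ := fun b => by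
    have hone := V.leftMul_mul_rightMul_conj_eq_one hIA hI h4 i hc b
    rw [V.map_mul hleft (hIA (rightMul_mem_iaSubgroup i
      (Subgroup.Normal.conj_mem inferInstance c hc b)))] at hone
    exact eq_inv_of_mul_eq_one_right hone
  rw [hright, ← hright 1, one_mul, inv_one, mul_one]

theorem rightMul_eq_one_of_mem (i : ι) {c : CoFree i}
    (hc : c ∈ ⁅commutator (CoFree i), (⊤ : Subgroup (CoFree i))⁆) : V (rightMul i c) = 1 := by
  have hle : ⁅commutator (CoFree i), (⊤ : Subgroup (CoFree i))⁆ ≤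
      (V.preimage ⊥).comap (rightMul i) := by
    rw [Subgroup.commutator_le]
    intro x hx b _
    have hx' := inv_mem hx
    have hmem : ∀ {y}, y ∈ commutator (CoFree i) → rightMul i y ∈ V.domain :=
      fun hy => hIA (rightMul_mem_iaSubgroup i hy)
    have hbx := Subgroup.Normal.conj_mem inferInstance _ hx' b
    have hsplit : rightMul i ⁅x, b⁆ = rightMul i x * rightMul i (b * x⁻¹ * b⁻¹) := by
      rw [← map_mul, commutatorElement_def, ← mul_assoc, ← mul_assoc]
    refine V.mem_preimage.2 ⟨hsplit ▸ mul_mem (hmem hx) (hmem hbx), ?_⟩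
    rw [Subgroup.mem_bot, hsplit, V.map_mul (hmem hx) (hmem hbx), V.rightMul_conj hIA hI h4 i hx',
      map_inv, V.map_inv (hmem hx), mul_inv_cancel]
  exact (V.mem_preimage.1 (hle hc)).2

theorem rightMul_map_of_mem_iaSubgroup (i : ι) {c : CoFree i} (hc : c ∈ commutator (CoFree i))
    {ν : MulAut (CoFree i)} (hν : ν ∈ iaSubgroup (CoFree i)) :
    V (rightMul i (ν c)) = V (rightMul i c) := by
  have hmem := inv_mul_mem_commutator_commutator hν hc
  have hmem' : c⁻¹ * ν c ∈ commutator (CoFree i) := inv_mul_mem_commutator hν c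
  conv_lhs => rw [← mul_inv_cancel_left c (ν c), map_mul]
  rw [V.map_mul (hIA (rightMul_mem_iaSubgroup i hc)) (hIA (rightMul_mem_iaSubgroup i hmem')),
    V.rightMul_eq_one_of_mem hIA hI h4 i hmem, mul_one]

variable [CharZero K]

theorem commute_extend_partialConj (i : ι) {ν : MulAut (CoFree i)} (hν : extend i ν ∈ V.domain)
    (w : CoFree i) : Commute (V (extend i ν)) (V (partialConj i w)) := by
  rw [← V.inner_comap_extend hIA hI]
  exact (V.comap (extend i)).commute_map_inner _ (three_le_card_ne h4 i) hν w

theorem commute_extend_bothMul (i : ι) {ν : MulAut (CoFree i)} (hν : ν ∈ iaSubgroup (CoFree i))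
    {u v : CoFree i} (h : Abelianization.of u = Abelianization.of v) :
    Commute (V (extend i ν)) (V (bothMul i (u, v))) := by
  have hνV := hIA (extend_mem_iaSubgroup i hν)
  have huv : u⁻¹ * v ∈ commutator (CoFree i) := QuotientGroup.eq.1 h
  have hright := hIA (rightMul_mem_iaSubgroup i huv)
  rw [bothMul_eq_partialConj_mul_rightMul,
    V.map_mul (hIA (partialConj_mem_iaSubgroup i u)) hright]
  refine (V.commute_extend_partialConj hIA hI h4 i hνV u).mul_right ?_
  rw [commute_iff_eq, ← mul_inv_eq_iff_eq_mul, ← V.map_conj hνV hright, extend_conj_rightMul,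
    V.rightMul_map_of_mem_iaSubgroup hIA hI h4 i huv hν]

theorem commute_partialConj_bothMul (i : ι) (w : CoFree i) {u v : CoFree i}
    (h : Abelianization.of u = Abelianization.of v) :
    Commute (V (partialConj i w)) (V (bothMul i (u, v))) := by
  rw [← V.inner_comap_extend hIA hI]
  exact V.commute_extend_bothMul hIA hI h4 i (conj_mem_iaSubgroup w) h

theorem commute_letterConj_bothMul {i a l : ι} (hia : i ≠ a) (hil : i ≠ l) (hal : a ≠ l)
    {u v : CoFree i} (h : Abelianization.of u = Abelianization.of v) :
    Commute (V (letterConj hal)) (V (bothMul i (u, v))) := by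
  rw [← extend_letterConj hia hil hal]
  exact V.commute_extend_bothMul hIA hI h4 i (partialConj_mem_iaSubgroup _ _) h

theorem magnusSubgroup_le_preimage_centralizer {a b c : ι} (hab : a ≠ b) (hac : a ≠ c)
    (hbc : b ≠ c) (hb : V (letterConj hab) ≠ 1) (hc : V (letterConj hac) ≠ 1) :
    magnusSubgroup ι ≤ V.preimage (Subgroup.centralizer {V (letterConj hab)}) := by
  refine magnusSubgroup_le fun i u v huv =>
    V.mem_preimage.2 ⟨hIA (bothMul_mem_iaSubgroup i huv), ?_⟩
  rw [Subgroup.mem_centralizer_singleton_iff]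
  suffices Commute (V (bothMul i (u, v))) (V (letterConj hab)) from this
  obtain rfl | hia := eq_or_ne i a
  · exact (V.commute_partialConj_bothMul hIA hI h4 i _ huv).symm
  obtain ⟨l, hal, hil, hl⟩ : ∃ (l : ι) (hal : a ≠ l), i ≠ l ∧ V (letterConj hal) ≠ 1 := by
    obtain rfl | hib := eq_or_ne i b
    · exact ⟨c, hac, hbc, hc⟩
    · exact ⟨b, hab, hib, hb⟩
  exact Aff.commute_trans hl (V.commute_letterConj_bothMul hIA hI h4 hia hil hal huv).symm
    (V.commute_partialConj_bothMul hIA hI h4 a _ rfl)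

end VirtualAffineRep

end PartialConjugations

section CommutatorVanishing

namespace VirtualAffineRep

variable {K : Type*} [Field K] [CharZero K] {ι : Type*} [DecidableEq ι] [Finite ι]
  (V : VirtualAffineRep K (MulAut (FreeGroup ι))) (hIA : iaSubgroup (FreeGroup ι) ≤ V.domain)
  (h4 : 4 ≤ Nat.card ι)

include hIA h4

theorem eq_one_of_letterConj_ne_one_of_letterConj_ne_one (hI : ∀ w, V (MulAut.conj w) = 1)
    {a b c : ι} (hab : a ≠ b) (hac : a ≠ c) (hbc : b ≠ c) (hb : V (letterConj hab) ≠ 1)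
    (hc : V (letterConj hac) ≠ 1) {u : MulAut (FreeGroup ι)} (hu : u ∈ ⁅V.domain, V.domain⁆) :
    V u = 1 := by
  have huN : u ∈ V.domain := Subgroup.commutator_le_left _ _ hu
  have hlin := V.lin_eq_one_of_mem_commutator hu
  have htors := V.letterConj_pow_exponent hIA hI h4 hab
  obtain ⟨r, hr, -, hur⟩ := Subgroup.exists_pow_mem_of_index_ne_zero
    (finiteIndex_transvectionSubgroup ι).index_ne_zero u
  have hcomm : Commute (V (u ^ r)) (V (letterConj hab)) := by
    apply Aff.commute_of_commute_conj V.exponent_ne_zero htors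
    rw [← V.map_conj (pow_mem huN r) (hIA (letterConj_mem_iaSubgroup hab))]
    have hconj : u ^ r * letterConj hab * (u ^ r)⁻¹ ∈ magnusSubgroup ι :=
      (Subgroup.mem_normalizer_iff.1
        (transvectionSubgroup_le_normalizer_magnusSubgroup hur) _).1
          (letterConj_mem_magnusSubgroup hab)
    have hle := V.magnusSubgroup_le_preimage_centralizer hIA hI h4 hab hac hbc hb hc
    exact (Subgroup.mem_centralizer_singleton_iff.1 (V.mem_preimage.1 (hle hconj)).2).symm
  have hlinK : (V (letterConj hab)).lin ≠ 1 := fun h =>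
    hb (Aff.eq_one_of_pow_eq_one h V.exponent_ne_zero htors)
  rw [V.map_pow huN] at hcomm
  exact Aff.eq_one_of_pow_eq_one hlin hr.ne'
    (Aff.eq_one_of_commute (by rw [Aff.lin_pow, hlin, one_pow]) hlinK hcomm)

theorem eq_one_of_letterConj_ne_one_of_inner_eq_one (hI : ∀ w, V (MulAut.conj w) = 1)
    {a b : ι} (hab : a ≠ b) (hb : V (letterConj hab) ≠ 1) {u : MulAut (FreeGroup ι)}
    (hu : u ∈ ⁅V.domain, V.domain⁆) : V u = 1 := by
  obtain ⟨c, hca, hcb⟩ := exists_ne_ne_of_three_le_card (by omega) a b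
  by_cases hc : V (letterConj hca.symm) = 1
  · have hconj_c : transvection hcb * letterConj hca.symm * (transvection hcb)⁻¹ =
        letterConj hca.symm * letterConj hab := by
      simpa only [pow_one] using transvection_pow_conj_letterConj hca.symm hcb hab 1
    have hconj_b : transvection hcb * letterConj hab * (transvection hcb)⁻¹ =
        letterConj hab := by
      rw [← extend_transvection hca.symm hab hcb, letterConj, extend_conj_partialConj, letter,
        transvection_of_ne _ (by simpa using hcb)]
    refine V.eq_one_of_conj_eq_one (transvection hcb) (fun u hu => ?_) hu
    refine (V.conj (transvection hcb)).eq_one_of_letterConj_ne_one_of_letterConj_ne_one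
      (V.iaSubgroup_le_domain_conj hIA _) h4 (fun w => by rw [V.conj_apply, conj_conj, hI])
      hab hca.symm hcb.symm ?_ ?_ hu
    · rwa [V.conj_apply, hconj_b]
    · rwa [V.conj_apply, hconj_c, V.map_mul (hIA (letterConj_mem_iaSubgroup _))
        (hIA (letterConj_mem_iaSubgroup _)), hc, one_mul]
  · exact V.eq_one_of_letterConj_ne_one_of_letterConj_ne_one hIA h4 hI hab hca.symm hcb.symm
      hb hc hu

theorem eq_one_of_letterConj_ne_one {a b : ι} (hab : a ≠ b) (hb : V (letterConj hab) ≠ 1)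
    {u : MulAut (FreeGroup ι)} (hu : u ∈ ⁅V.domain, V.domain⁆) : V u = 1 := by
  by_cases hI : ∀ w, V (MulAut.conj w) = 1
  · exact V.eq_one_of_letterConj_ne_one_of_inner_eq_one hIA h4 hI hab hb hu
  · obtain ⟨w, hw⟩ := not_forall.1 hI
    have hcomm : ∀ {x}, x ∈ V.domain → Commute (V x) (V (MulAut.conj w)) := fun hx =>
      V.commute_map_inner hIA (by omega) hx w
    exact (V.mem_preimage.1 (V.commutator_le_preimage_bot le_rfl (fun x hx y hy =>
      Aff.commute_trans hw (hcomm hx) (hcomm hy).symm) hu)).2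

omit [DecidableEq ι] in
theorem eq_one_of_mem_commutator [⁅V.domain, V.domain⁆.FiniteIndex]
    {u : MulAut (FreeGroup ι)} (hu : u ∈ ⁅V.domain, V.domain⁆) : V u = 1 := by
  classical
  by_cases h : ∀ (s : MulAut (FreeGroup ι)) (a b : ι) (hab : a ≠ b),
      V.conj s (letterConj hab) = 1
  · have hle : ⁅V.domain, V.domain⁆ ≤ V.domain := Subgroup.commutator_le_left _ _
    have hlin := V.lin_eq_one_of_mem_commutator hu
    have hsup : ⁅⁅V.domain, V.domain⁆, ⁅V.domain, V.domain⁆⁆ ⊔ letterConjClosure ι ≤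
        V.preimage ⊥ := by
      refine sup_le (V.commutator_le_preimage_bot hle fun x hx y hy => Aff.commute_of_lin_eq_one
        (V.lin_eq_one_of_mem_commutator hx) (V.lin_eq_one_of_mem_commutator hy)) ?_
      refine (Subgroup.closure_le _).2 fun x hx => ?_
      obtain ⟨_, ⟨i, j, hij, rfl⟩, hx⟩ := Group.mem_conjugatesOfSet_iff.1 hx
      obtain ⟨s, rfl⟩ := isConj_iff.1 hx
      exact V.mem_preimage.2 ⟨V.conj_mem (hIA (letterConj_mem_iaSubgroup hij)) s, h s i j hij⟩
    obtain ⟨r, hr, -, hur⟩ := Subgroup.exists_pow_mem_of_index_ne_zero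
      (finiteIndex_commutator_sup_letterConjClosure (by omega) ⁅V.domain, V.domain⁆).index_ne_zero u
    have hpow : V (u ^ r) = 1 := (V.mem_preimage.1 (hsup hur)).2
    rw [V.map_pow (hle hu)] at hpow
    exact Aff.eq_one_of_pow_eq_one hlin hr.ne' hpow
  · push Not at h
    obtain ⟨s, a, b, hab, hne⟩ := h
    exact V.eq_one_of_conj_eq_one s (fun _ => (V.conj s).eq_one_of_letterConj_ne_one
      (V.iaSubgroup_le_domain_conj hIA s) h4 hab hne) hu

end VirtualAffineRep

end CommutatorVanishing

/-! ### Characters and affine representations -/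

section FiniteAbelianization

theorem eq_one_of_finite_abelianization {Γ A : Type*} [Group Γ] [Finite (Abelianization Γ)]
    [CommGroup A] [IsMulTorsionFree A] (φ : Γ →* A) : φ = 1 := by
  ext g
  have hpow : φ g ^ Nat.card (Abelianization Γ) = 1 := by
    rw [← Abelianization.lift_apply_of φ, ← map_pow, pow_card_eq_one', map_one]
  exact (pow_eq_one_iff_left Nat.card_pos.ne').1 hpow

theorem exists_addMonoidHom_complex_ne_zero {A : Type*} [CommGroup A] [Group.FG A] {x : A}
    (hx : ¬ IsOfFinOrder x) : ∃ φ : Additive A →+ ℂ, φ (.ofMul x) ≠ 0 := by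
  have : Module.Finite ℤ (Additive A) := Module.Finite.iff_addGroup_fg.2 inferInstance
  set T := Submodule.torsion ℤ (Additive A)
  have hne : T.mkQ (.ofMul x) ≠ 0 := by
    rw [Submodule.mkQ_apply, Ne, Submodule.Quotient.mk_eq_zero, Submodule.mem_torsion_iff]
    rintro ⟨a, ha⟩
    exact hx (isOfFinOrder_iff_zpow_eq_one.2 ⟨a, nonZeroDivisors.coe_ne_zero a, ha⟩)
  obtain ⟨f, hf⟩ : ∃ f : Module.Dual ℤ (Additive A ⧸ T), f (T.mkQ (.ofMul x)) ≠ 0 := by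
    simpa using (Module.forall_dual_apply_eq_zero_iff ℤ (T.mkQ (.ofMul x))).not.2 hne
  exact ⟨(Int.castAddHom ℂ).comp (f.comp T.mkQ).toAddMonoidHom, by simpa using hf⟩

theorem finite_abelianization_of_finiteIndex_commutator {G : Type*} [Group G] {N : Subgroup G}
    (h : ⁅N, N⁆.FiniteIndex) : Finite (Abelianization N) := by
  have hindex := h.index_ne_zero
  rw [← Subgroup.map_subtype_commutator, Subgroup.index_map_subtype] at hindex
  have : (commutator N).FiniteIndex := ⟨left_ne_zero_of_mul hindex⟩
  exact inferInstanceAs (Finite (N ⧸ commutator N))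

theorem finiteIndex_commutator_commutator_iff {G : Type*} [Group G] {N : Subgroup G}
    [N.FiniteIndex] :
    ⁅commutator N, commutator N⁆.FiniteIndex ↔ ⁅⁅N, N⁆, ⁅N, N⁆⁆.FiniteIndex := by
  have hmap : ⁅commutator N, commutator N⁆.map N.subtype = ⁅⁅N, N⁆, ⁅N, N⁆⁆ := by
    rw [Subgroup.map_commutator, Subgroup.map_subtype_commutator]
  rw [← hmap, Subgroup.finiteIndex_iff, Subgroup.finiteIndex_iff, Subgroup.index_map_subtype,
    mul_ne_zero_iff_right Subgroup.FiniteIndex.index_ne_zero]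

end FiniteAbelianization

section Eigenvectors

theorem exists_eigenvector_apply_ne_zero {Q M : Type*} [CommGroup Q] [Finite Q] [AddCommGroup M]
    [Module ℂ M] (ρ : Representation ℂ Q M) (f : M →ₗ[ℂ] ℂ) {m : M} (hm : f m ≠ 0) :
    ∃ (χ : Q →* ℂˣ) (e : M), (∀ q, ρ q e = (χ q : ℂ) • e) ∧ f e ≠ 0 := by
  have := Fintype.ofFinite Q
  classical
  -- The isotypic projections of `m` sum to a nonzero multiple of `m`.
  let proj (ψ : AddChar (Additive Q) ℂ) : M := ∑ q : Q, ψ (-.ofMul q) • ρ q m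
  have hsum : ∑ ψ, proj ψ = (Fintype.card Q : ℂ) • m := by
    simp only [proj]
    rw [Finset.sum_comm]
    simp only [← Finset.sum_smul, AddChar.sum_apply_eq_ite, neg_eq_zero, ofMul_eq_zero]
    simp
  obtain ⟨ψ, hψ⟩ : ∃ ψ, f (proj ψ) ≠ 0 := by
    by_contra! hzero
    have hf := congrArg f hsum
    rw [map_sum, Finset.sum_eq_zero fun ψ _ => hzero ψ, map_smul, smul_eq_mul] at hf
    exact mul_ne_zero (Nat.cast_ne_zero.2 Fintype.card_ne_zero) hm hf.symm
  let χ : Q →* ℂ :=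
    { toFun q := ψ (.ofMul q)
      map_one' := by simp
      map_mul' q r := by rw [ofMul_mul, AddChar.map_add_eq_mul] }
  refine ⟨χ.toHomUnits, proj ψ, fun q => ?_, hψ⟩
  rw [MonoidHom.coe_toHomUnits, map_sum, Finset.smul_sum]
  refine Fintype.sum_equiv (Equiv.mulLeft q) _ _ fun r => ?_
  have hψq : ψ (-.ofMul r) = χ q * ψ (-.ofMul (q * r)) := by
    rw [ofMul_mul, neg_add, AddChar.map_add_eq_mul, ← mul_assoc]
    change _ = ψ (.ofMul q) * ψ (-.ofMul q) * _
    rw [← AddChar.map_add_eq_mul, add_neg_cancel, AddChar.map_zero_eq_one, one_mul]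
  rw [Equiv.coe_mulLeft, map_smul, hψq, smul_smul, map_mul ρ, Module.End.mul_apply]

end Eigenvectors

section EquivariantCharacters

open commutatorElement

variable {Γ : Type*} [Group Γ]

variable (Γ) in
/-- The action of a group by conjugation on the complex characters of its commutator subgroup. -/
def conjCharacter : Representation ℂ Γ (Additive (commutator Γ) →+ ℂ) where
  toFun g :=
    { toFun φ := φ.comp (MulAut.conjNormal g⁻¹).toMonoidHom.toAdditive
      map_add' _ _ := rfl
      map_smul' _ _ := rfl }
  map_one' := by ext; simp
  map_mul' g h := by ext; simp

theorem conjCharacter_apply (g : Γ) (φ : Additive (commutator Γ) →+ ℂ) (u : commutator Γ) :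
    conjCharacter Γ g φ (.ofMul u) = φ (.ofMul (MulAut.conjNormal g⁻¹ u)) := rfl

theorem conjCharacter_eq_one {c : Γ} (hc : c ∈ commutator Γ) : conjCharacter Γ c = 1 := by
  refine LinearMap.ext fun φ => AddMonoidHom.ext fun u => ?_
  induction u using Additive.rec with | ofMul u
  have hconj : MulAut.conjNormal c⁻¹ u = ⟨c, hc⟩⁻¹ * u * ⟨c, hc⟩ := Subtype.ext (by simp)
  rw [conjCharacter_apply, hconj]
  simp

theorem exists_equivariant_character [Finite (Abelianization Γ)]
    {φ : Additive (commutator Γ) →+ ℂ} {u : commutator Γ} (hu : φ (.ofMul u) ≠ 0) :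
    ∃ (χ : Γ →* ℂˣ) (ψ : Additive (commutator Γ) →+ ℂ),
      (∀ g v, ψ (.ofMul (MulAut.conjNormal g v)) = χ g * ψ (.ofMul v)) ∧ ψ (.ofMul u) ≠ 0 := by
  let ρ : Representation ℂ (Abelianization Γ) (Additive (commutator Γ) →+ ℂ) :=
    QuotientGroup.lift (commutator Γ) (conjCharacter Γ) fun _ hc => conjCharacter_eq_one hc
  let eval : (Additive (commutator Γ) →+ ℂ) →ₗ[ℂ] ℂ :=
    { toFun ψ := ψ (.ofMul u)
      map_add' _ _ := rfl
      map_smul' _ _ := rfl }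
  obtain ⟨χ, ψ, hχ, hψ⟩ := exists_eigenvector_apply_ne_zero ρ eval hu
  refine ⟨(χ.comp Abelianization.of)⁻¹, ψ, fun g v => ?_, hψ⟩
  have hg := DFunLike.congr_fun (hχ (.of g⁻¹)) (.ofMul v)
  change conjCharacter Γ g⁻¹ ψ _ = _ at hg
  rw [conjCharacter_apply, inv_inv, map_inv, map_inv] at hg
  exact hg

/-- The commutator `⁅g, h⁆` as an element of the commutator subgroup. -/
def bracket (g h : Γ) : commutator Γ :=
  ⟨⁅g, h⁆, Subgroup.commutator_mem_commutator (Subgroup.mem_top g) (Subgroup.mem_top h)⟩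

theorem bracket_mul (g h k : Γ) :
    bracket (g * h) k = MulAut.conjNormal g (bracket h k) * bracket g k :=
  Subtype.ext (by simp [bracket, commutatorElement_def, mul_assoc])

theorem bracket_coe (u : commutator Γ) (g : Γ) :
    bracket (u : Γ) g = u * MulAut.conjNormal g u⁻¹ :=
  Subtype.ext (by simp [bracket, commutatorElement_def, mul_assoc])

variable {χ : Γ →* ℂˣ} {ψ : Additive (commutator Γ) →+ ℂ}

theorem apply_bracket_mul (hχ : ∀ g v, ψ (.ofMul (MulAut.conjNormal g v)) = χ g * ψ (.ofMul v))
    (g h k : Γ) :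
    ψ (.ofMul (bracket (g * h) k)) = ψ (.ofMul (bracket g k)) + χ g * ψ (.ofMul (bracket h k)) := by
  rw [bracket_mul, ofMul_mul, map_add, hχ, add_comm]

theorem eq_zero_of_conj_invariant [Finite (Abelianization Γ)]
    (hψ : ∀ g v, ψ (.ofMul (MulAut.conjNormal g v)) = ψ (.ofMul v)) : ψ = 0 := by
  have hbracket (g h : Γ) : ψ (.ofMul (bracket g h)) = 0 := by
    let θ : Γ →* Multiplicative ℂ := MonoidHom.mk' (fun g => .ofAdd (ψ (.ofMul (bracket g h))))
      fun x y => by rw [bracket_mul, ofMul_mul, map_add, hψ, add_comm, ofAdd_add]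
    exact congrArg Multiplicative.toAdd (DFunLike.congr_fun (eq_one_of_finite_abelianization θ) g)
  have hker : commutator Γ ≤ (AddMonoidHom.toMultiplicativeRight ψ).ker.map
      (commutator Γ).subtype :=
    Subgroup.commutator_le.2 fun g _ h _ => ⟨bracket g h, hbracket g h, rfl⟩
  refine AddMonoidHom.ext fun u => ?_
  obtain ⟨v, hv, hvu⟩ := hker u.toMul.2
  rw [← ofMul_toMul u, ← Subtype.ext hvu]
  exact hv

-- The representation is `g ↦ (z ↦ χ g * z + ψ ⁅g, k⁆)`, for any `k` with `χ k ≠ 1`.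
theorem exists_hom_aff_apply_ne_one [Finite (Abelianization Γ)]
    {φ : Additive (commutator Γ) →+ ℂ} {u : commutator Γ} (hu : φ (.ofMul u) ≠ 0) :
    ∃ F : Γ →* Aff ℂ, F u ≠ 1 := by
  obtain ⟨χ, ψ, hχ, hψ⟩ := exists_equivariant_character hu
  obtain ⟨k, hk⟩ : ∃ k, χ k ≠ 1 := by
    by_contra! hone
    have hzero : ψ = 0 := eq_zero_of_conj_invariant fun g v => by
      rw [hχ, hone, Units.val_one, one_mul]
    exact hψ (by rw [hzero, AddMonoidHom.zero_apply])
  refine ⟨MonoidHom.mk' (fun g => ⟨χ g, ψ (.ofMul (bracket g k))⟩) fun g h =>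
    Aff.ext (map_mul χ g h) (apply_bracket_mul hχ g h k), fun hF => hψ ?_⟩
  have htrans : ψ (.ofMul (bracket (u : Γ) k)) = 0 := congrArg Aff.trans hF
  rw [bracket_coe, ofMul_mul, map_add, hχ, ofMul_inv, map_neg] at htrans
  have hprod : (1 - χ k : ℂ) * ψ (.ofMul u) = 0 := by linear_combination htrans
  exact (mul_eq_zero.1 hprod).resolve_left fun h => hk (Units.ext (sub_eq_zero.1 h).symm)

theorem finite_abelianization_commutator [Group.FG Γ] [Finite (Abelianization Γ)]
    (h : ∀ F : Γ →* Aff ℂ, ∀ u ∈ commutator Γ, F u = 1) :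
    Finite (Abelianization (commutator Γ)) := by
  have : (commutator Γ).FiniteIndex :=
    Subgroup.finiteIndex_iff_finite_quotient.2 ‹Finite (Abelianization Γ)›
  have : Group.FG (Abelianization (commutator Γ)) :=
    Group.fg_of_surjective (f := Abelianization.of) QuotientGroup.mk_surjective
  refine CommGroup.finite_of_fg_isMulTorsion _ fun x => ?_
  by_contra hx
  obtain ⟨φ, hφ⟩ := exists_addMonoidHom_complex_ne_zero hx
  obtain ⟨u, rfl⟩ := QuotientGroup.mk_surjective x
  obtain ⟨F, hF⟩ := exists_hom_aff_apply_ne_one (u := u)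
    (φ := φ.comp Abelianization.of.toAdditive) hφ
  exact hF (h F u u.2)

end EquivariantCharacters

section DoubleCommutator

/-- The virtual affine representation given by a representation of a normal subgroup of finite
index with finite abelianization. -/
def VirtualAffineRep.ofHom {K G : Type*} [Field K] [Group G] (N : Subgroup G) [N.Normal]
    [N.FiniteIndex] [Finite (Abelianization N)] (F : N →* Aff K) : VirtualAffineRep K G where
  toFun := Function.extend Subtype.val F 1
  domain := N
  normal := inferInstance
  map_mul' x hx y hy := by
    have hF := Subtype.val_injective.extend_apply F (1 : G → Aff K)
    have hxy := hF (⟨x, hx⟩ * ⟨y, hy⟩)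
    rw [F.map_mul, ← hF, ← hF] at hxy
    exact hxy
  exponent := N.index * Nat.card (Abelianization N)
  exponent_ne_zero := mul_ne_zero Subgroup.FiniteIndex.index_ne_zero Nat.card_pos.ne'
  pow_exponent_mem s := by
    rw [pow_mul]
    exact N.pow_mem (N.pow_index_mem s) _
  lin_pow_exponent s := by
    have hpow : (F (⟨s ^ N.index, N.pow_index_mem s⟩ ^ Nat.card (Abelianization N))).lin = 1 := by
      rw [← Aff.linHom_apply, ← MonoidHom.comp_apply, ← Abelianization.lift_apply_of, map_pow,
        pow_card_eq_one', map_one]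
    rw [← Subtype.val_injective.extend_apply F (1 : G → Aff K)] at hpow
    rwa [pow_mul]

theorem VirtualAffineRep.ofHom_coe {K G : Type*} [Field K] [Group G] (N : Subgroup G) [N.Normal]
    [N.FiniteIndex] [Finite (Abelianization N)] (F : N →* Aff K) (x : N) :
    VirtualAffineRep.ofHom N F x = F x :=
  Subtype.val_injective.extend_apply F 1 x

theorem finiteIndex_commutator_commutator_of_iaSubgroup_le {ι : Type*} [Finite ι]
    (h4 : 4 ≤ Nat.card ι) (N : Subgroup (MulAut (FreeGroup ι))) [N.Normal] [N.FiniteIndex]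
    (hN : iaSubgroup (FreeGroup ι) ≤ N) : ⁅⁅N, N⁆, ⁅N, N⁆⁆.FiniteIndex := by
  have := fg_mulAut_freeGroup ι
  have hindex := finiteIndex_commutator_of_iaSubgroup_le (by lia) N hN
  have := finite_abelianization_of_finiteIndex_commutator hindex
  have : Finite (Abelianization (commutator N)) := by
    refine finite_abelianization_commutator fun F u hu => ?_
    let V := VirtualAffineRep.ofHom N F
    have : ⁅V.domain, V.domain⁆.FiniteIndex := hindex
    rw [← VirtualAffineRep.ofHom_coe]
    exact V.eq_one_of_mem_commutator hN h4 (coe_mem_commutator.2 hu)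
  have : (commutator N).FiniteIndex :=
    Subgroup.finiteIndex_iff_finite_quotient.2 ‹Finite (Abelianization N)›
  exact finiteIndex_commutator_commutator_iff.1 finiteIndex_commutator_of_finite_abelianization

end DoubleCommutator

end FreeAut

/-- For `n ≥ 4`, if `Γ` is a finite index subgroup of `Aut(Fₙ)`
containing `IAₙ`, then both `Γ` and its commutator subgroup `[Γ, Γ]` have finite
abelianizations; in particular every group homomorphism from `Γ` or from `[Γ, Γ]` to
`(ℝ, +)` is trivial. -/
theorem finite_index_contains_IA_finite_abelianizations
    (n : ℕ) (hn : 4 ≤ n)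
    (Γ : Subgroup (AutF n)) [Γ.FiniteIndex]
    (h : IA n ≤ Γ) :
    Finite (Abelianization Γ) ∧ Finite (Abelianization ↥(commutator Γ)) ∧
      (∀ φ : Γ →* Multiplicative ℝ, φ = 1) ∧
      (∀ φ : ↥(commutator Γ) →* Multiplicative ℝ, φ = 1) := by
  have hcore : FreeAut.iaSubgroup (FreeGrp n) ≤ Γ.normalCore :=
    Subgroup.normal_le_normalCore.2 fun _ hα => h (FreeAut.mem_iaSubgroup.1 hα)
  have hcard : 4 ≤ Nat.card (Fin n) := by rwa [Nat.card_fin]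
  have hle : ⁅Γ.normalCore, Γ.normalCore⁆ ≤ ⁅Γ, Γ⁆ :=
    Subgroup.commutator_mono Γ.normalCore_le Γ.normalCore_le
  have hindex :=
    FreeAut.finiteIndex_commutator_commutator_of_iaSubgroup_le hcard Γ.normalCore hcore
  have hΓ'' : ⁅⁅Γ, Γ⁆, ⁅Γ, Γ⁆⁆.FiniteIndex :=
    Subgroup.finiteIndex_of_le (Subgroup.commutator_mono hle hle)
  have hΓ' : ⁅Γ, Γ⁆.FiniteIndex := Subgroup.finiteIndex_of_le (Subgroup.commutator_le_self _)
  have hfin : Finite (Abelianization Γ) :=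
    FreeAut.finite_abelianization_of_finiteIndex_commutator hΓ'
  have hfin' : Finite (Abelianization (commutator Γ)) :=
    FreeAut.finite_abelianization_of_finiteIndex_commutator
      (FreeAut.finiteIndex_commutator_commutator_iff.2 hΓ'')
  exact ⟨hfin, hfin', FreeAut.eq_one_of_finite_abelianization,
    FreeAut.eq_one_of_finite_abelianization⟩
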